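/- Let Ω ⊂ ℂⁿ be a bounded convex domain whose boundary is C^{1,ε}-smooth for some ε > 0, and let o ∈ Ω. Suppose (z_k) and (w_m) are sequences in Ω with z_k → x ∈ ∂Ω and w_m → x ∈ ∂Ω (converging to the same boundary point). Then the Gromov products with respect to the Kobayashi distance satisfy lim_{k,m → ∞} (z_k | w_m)_o = ∞. -/

import Mathlib

open Metric Set MeasureTheory Filter Topology

noncomputable section

variable {E : Type*} [NormedAddCommGroup E] [NormedSpace ℂ E]

/-- Distance from `x` to the boundary of `D`. -/
def bdist (D : Set E) (x : E) : ℝ := Metric.infDist x (frontier D)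

/-- Distance from `x` to the boundary of `D` along the complex line `x + ℂ v`. -/
def bdistDir (D : Set E) (x v : E) : ℝ :=
  Metric.infDist x (frontier D ∩ {w | ∃ c : ℂ, w = x + c • v})

/-- The infinitesimal Kobayashi (pseudo-)metric of `D ⊆ E`. -/
def kobMetric (D : Set E) (x v : E) : ℝ :=
  sInf { r : ℝ | ∃ (f : ℂ → E) (ξ : ℂ),
    DifferentiableOn ℂ f (ball (0:ℂ) 1) ∧ MapsTo f (ball (0:ℂ) 1) D ∧
    f 0 = x ∧ ξ • derivWithin f (ball (0:ℂ) 1) 0 = v ∧ r = ‖ξ‖ }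

/-- `σ` is absolutely continuous on `[a,b]`, with a.e. derivative `g`. -/
def IsACWithDeriv (σ g : ℝ → E) (a b : ℝ) : Prop :=
  IntervalIntegrable g volume a b ∧
  ∀ t ∈ Icc a b, σ t = σ a + ∫ s in a..t, g s

/-- The Kobayashi pseudo-distance of `D`, defined via lengths of absolutely
continuous curves (Venturini's description). -/
def kobDist (D : Set E) (x y : E) : ℝ :=
  sInf { r : ℝ | ∃ (a b : ℝ) (σ g : ℝ → E), a ≤ b ∧
    IsACWithDeriv σ g a b ∧ MapsTo σ (Icc a b) D ∧ σ a = x ∧ σ b = y ∧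
    r = ∫ t in a..b, kobMetric D (σ t) (g t) }

/-- Log-type convex domain, with explicit constants `C, ν > 0`. -/
def LogTypeConvexWith (D : Set E) (C ν : ℝ) : Prop :=
  IsOpen D ∧ D.Nonempty ∧ Bornology.IsBounded D ∧ Convex ℝ D ∧ 0 < C ∧ 0 < ν ∧
  ∀ z ∈ D, ∀ v : E, v ≠ 0 →
    bdistDir D z v ≤ C / |Real.log (bdist D z)| ^ (1 + ν)

/-- Log-type convex domain. -/
def LogTypeConvex (D : Set E) : Prop := ∃ C ν : ℝ, LogTypeConvexWith D C ν

/-- A `ℂ`-convex set: every nonempty intersection with a complex affine line is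
connected and simply connected. -/
def CConvex (D : Set E) : Prop :=
  ∀ z v : E, v ≠ 0 → (D ∩ {w | ∃ c : ℂ, w = z + c • v}).Nonempty →
    IsConnected (D ∩ {w | ∃ c : ℂ, w = z + c • v}) ∧
    SimplyConnectedSpace ↥(D ∩ {w | ∃ c : ℂ, w = z + c • v})

/-- Log-type `ℂ`-convex domain. -/
def LogTypeCConvex (D : Set E) : Prop :=
  IsOpen D ∧ D.Nonempty ∧ Bornology.IsBounded D ∧ CConvex D ∧
  ∃ C ν : ℝ, 0 < C ∧ 0 < ν ∧
    ∀ z ∈ D, ∀ v : E, v ≠ 0 →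
      bdistDir D z v ≤ C / |Real.log (bdist D z)| ^ (1 + ν)

/-- `σ : [a,b] → D` (with a.e. derivative `g`) is a `(λ,κ)`-almost geodesic for the
Kobayashi distance of `D`. -/
def AlmostGeodesicOn (D : Set E) (lam kap : ℝ) (σ g : ℝ → E) (a b : ℝ) : Prop :=
  MapsTo σ (Icc a b) D ∧ IsACWithDeriv σ g a b ∧
  (∀ s ∈ Icc a b, ∀ t ∈ Icc a b,
    (1 / lam) * |t - s| - kap ≤ kobDist D (σ s) (σ t) ∧
    kobDist D (σ s) (σ t) ≤ lam * |t - s| + kap) ∧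
  (∀ᵐ t ∂volume, t ∈ Icc a b → kobMetric D (σ t) (g t) ≤ lam)

/-- `σ : [a,b] → D` is a `C`-rough geodesic for the Kobayashi distance of `D`. -/
def RoughGeodesicOn (D : Set E) (C : ℝ) (σ : ℝ → E) (a b : ℝ) : Prop :=
  MapsTo σ (Icc a b) D ∧
  ∀ s ∈ Icc a b, ∀ t ∈ Icc a b,
    |t - s| - C ≤ kobDist D (σ s) (σ t) ∧ kobDist D (σ s) (σ t) ≤ |t - s| + C

/-- `ρ` is a `C¹` local defining function for `D` near `ξ` on the open set `W`. -/
def IsLocalDefiningFn (D : Set E) (ξ : E) (W : Set E) (ρ : E → ℝ) : Prop :=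
  IsOpen W ∧ ξ ∈ W ∧ ContDiffOn ℝ 1 ρ W ∧ (∀ x ∈ W, fderiv ℝ ρ x ≠ 0) ∧
  D ∩ W = {x ∈ W | ρ x < 0} ∧ frontier D ∩ W = {x ∈ W | ρ x = 0}

/-- `ξ` is a Dini-smooth boundary point of `D`: the boundary is `C¹` near `ξ` and the
unit normal admits a modulus of continuity `ω` satisfying the Dini condition. -/
def DiniSmoothBoundaryPoint (D : Set E) (ξ : E) : Prop :=
  ∃ (W : Set E) (ρ : E → ℝ) (ω : ℝ → ℝ),
    IsLocalDefiningFn D ξ W ρ ∧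
    (∀ t ∈ Icc (0:ℝ) 1, 0 ≤ ω t) ∧ MonotoneOn ω (Icc (0:ℝ) 1) ∧
    IntegrableOn (fun t => ω t / t) (Ioc (0:ℝ) 1) ∧
    ∀ x ∈ frontier D ∩ W, ∀ y ∈ frontier D ∩ W, ‖x - y‖ ≤ 1 →
      ‖(‖fderiv ℝ ρ x‖)⁻¹ • fderiv ℝ ρ x - (‖fderiv ℝ ρ y‖)⁻¹ • fderiv ℝ ρ y‖ ≤ ω ‖x - y‖

/-- `D` has `C^{1,ε}` boundary: near every boundary point there is a `C¹` defining
function whose differential is `ε`-Hölder. -/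
def HolderC1Boundary (D : Set E) (ε : ℝ) : Prop :=
  ∀ ξ ∈ frontier D, ∃ (W : Set E) (ρ : E → ℝ) (M : ℝ), 0 < M ∧
    IsLocalDefiningFn D ξ W ρ ∧
    ∀ x ∈ W, ∀ y ∈ W, ‖fderiv ℝ ρ x - fderiv ℝ ρ y‖ ≤ M * ‖x - y‖ ^ ε

/-- The complex affine tangent hyperplane of `∂D` at `x`, computed from a local
defining function `ρ`. -/
def complexTangentHyperplane (ρ : E → ℝ) (x : E) : Set E :=
  {w : E | fderiv ℝ ρ x (w - x) = 0 ∧ fderiv ℝ ρ x ((Complex.I : ℂ) • (w - x)) = 0}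

/-- The Gromov product of `x` and `y` with respect to the base point `o`, for the
Kobayashi distance of `D`. -/
def gromovProd (D : Set E) (o x y : E) : ℝ :=
  (kobDist D x o + kobDist D o y - kobDist D x y) / 2

end

/-!
Slice `D` by the complex line through a point `z ∈ D` near `x` in the direction `o - x`. Let `p` be
a point of the slice outside `D` nearest to `z` and let `δ` be its distance to `z`, in units of
`‖o - x‖`. Since `∂D` is `C^{1,ε}`, the point of the slice at height `u` above `p` lies in a disc
contained in `D` whose radius is of order `u ^ (1 - γ)`, hence much larger than `u`, and whose
distance to `p` is of order `u ^ (1 + γ)`, where `γ = ε / (2 + ε)`. So the Kobayashi metric in the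
slice direction is at most `1 / (2 * u) + O(u ^ (γ - 1))`, and moving `z` up to a fixed height `t`
costs at most `½ log (t / δ) + O(1)`. By convexity `D` lies in a half-space with `p` on its
boundary, whence `K(z, o) ≥ ½ log (1 / δ) - O(1)`. If `z` and `w` are close enough to `x` in terms
of `t`, their images at height `t` are at Kobayashi distance `O(1)` from each other, so `K(z, w)`
falls short of `K(z, o) + K(o, w)` by at least `log (1 / t) - O(1)`, and `t` is arbitrary.
-/

open scoped ComplexConjugate

section HolomorphicDiscs

variable {E F : Type*} [NormedAddCommGroup E] [NormedSpace ℂ E]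
  [NormedAddCommGroup F] [NormedSpace ℂ F] {D : Set E} {x v : E} {f : ℂ → E} {r R : ℝ}

/-- `f` is a holomorphic disc of radius `R` in `D` with centre `x` and velocity `v`. Letting the
radius vary instead of rescaling the velocity, the Kobayashi metric is the infimum of `R⁻¹`. -/
structure IsHolDisc (D : Set E) (R : ℝ) (f : ℂ → E) (x v : E) : Prop where
  differentiableOn : DifferentiableOn ℂ f (ball 0 R)
  mapsTo : MapsTo f (ball 0 R) D
  map_zero : f 0 = x
  hasDerivAt : HasDerivAt f v 0

theorem IsHolDisc.comp_mul (hf : IsHolDisc D R f x v) {c : ℂ} {S : ℝ}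
    (hS : ∀ ζ ∈ ball (0 : ℂ) S, c * ζ ∈ ball (0 : ℂ) R) :
    IsHolDisc D S (fun ζ => f (c * ζ)) x (c • v) where
  differentiableOn := hf.differentiableOn.comp (by fun_prop) hS
  mapsTo _ hζ := hf.mapsTo (hS _ hζ)
  map_zero := by rw [mul_zero, hf.map_zero]
  hasDerivAt := by
    have hmul : HasDerivAt (fun ζ : ℂ => c * ζ) c 0 := by
      simpa only [mul_one, id] using (hasDerivAt_id (0 : ℂ)).const_mul c
    exact HasDerivAt.scomp_of_eq (0 : ℂ) hf.hasDerivAt hmul (mul_zero c).symm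

theorem isHolDisc_affine (hr : 0 < r) (hD : ball x r ⊆ D) (hR : R * ‖v‖ ≤ r) :
    IsHolDisc D R (fun ζ => x + ζ • v) x v where
  differentiableOn := by fun_prop
  mapsTo ζ hζ := by
    have hζ : ‖ζ‖ < R := mem_ball_zero_iff.1 hζ
    refine hD ?_
    rw [mem_ball_iff_norm, add_sub_cancel_left, norm_smul]
    rcases eq_or_ne v 0 with rfl | hv
    · rwa [norm_zero, mul_zero]
    · exact (mul_lt_mul_of_pos_right hζ (norm_pos_iff.2 hv)).trans_le hR
  map_zero := by rw [zero_smul, add_zero]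
  hasDerivAt := by
    simpa only [one_smul, id] using ((hasDerivAt_id (0 : ℂ)).smul_const v).const_add x

theorem kobMetric_nonneg (D : Set E) (x v : E) : 0 ≤ kobMetric D x v := by
  refine Real.sInf_nonneg ?_
  rintro _ ⟨f, ξ, -, -, -, -, rfl⟩
  exact norm_nonneg ξ

theorem IsHolDisc.kobMetric_le (hR : 0 < R) (hf : IsHolDisc D R f x v) :
    kobMetric D x v ≤ R⁻¹ := by
  have hR' : (R : ℂ) ≠ 0 := Complex.ofReal_ne_zero.2 hR.ne'
  have hg : IsHolDisc D 1 (fun ζ => f (R * ζ)) x ((R : ℂ) • v) := by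
    refine hf.comp_mul fun ζ hζ => ?_
    rw [mem_ball_zero_iff, norm_mul, Complex.norm_real, Real.norm_of_nonneg hR.le]
    exact mul_lt_of_lt_one_right hR (mem_ball_zero_iff.1 hζ)
  refine csInf_le ⟨0, ?_⟩ ⟨_, (R : ℂ)⁻¹, hg.differentiableOn, hg.mapsTo, hg.map_zero, ?_, ?_⟩
  · rintro _ ⟨f, ξ, -, -, -, -, rfl⟩
    exact norm_nonneg ξ
  · rw [derivWithin_of_isOpen isOpen_ball (mem_ball_self one_pos), hg.hasDerivAt.deriv,
      inv_smul_smul₀ hR']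
  · rw [norm_inv, Complex.norm_real, Real.norm_of_nonneg hR.le]

theorem exists_isHolDisc_of_kobMetric_lt (hD : D ∈ 𝓝 x) (hr : kobMetric D x v < r) :
    ∃ (R : ℝ) (f : ℂ → E), r⁻¹ < R ∧ IsHolDisc D R f x v := by
  have hr0 : 0 < r := (kobMetric_nonneg D x v).trans_lt hr
  obtain ⟨s, hs, hsD⟩ := Metric.mem_nhds_iff.1 hD
  have hdisc : IsHolDisc D (s / (‖v‖ + 1)) _ x v := isHolDisc_affine hs hsD <| by
    rw [div_mul_eq_mul_div, div_le_iff₀ (by positivity)]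
    nlinarith
  have hunit := hdisc.comp_mul (S := 1) (c := ((s / (‖v‖ + 1) : ℝ) : ℂ)) fun ζ hζ => by
    rw [mem_ball_zero_iff, norm_mul, Complex.norm_real, Real.norm_of_nonneg (by positivity)]
    exact mul_lt_of_lt_one_right (by positivity) (mem_ball_zero_iff.1 hζ)
  have hderiv : ((s / (‖v‖ + 1) : ℝ) : ℂ)⁻¹ • derivWithin
      (fun ζ : ℂ => x + (((s / (‖v‖ + 1) : ℝ) : ℂ) * ζ) • v) (ball 0 1) 0 = v := by
    rw [derivWithin_of_isOpen isOpen_ball (mem_ball_self one_pos), hunit.hasDerivAt.deriv,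
      inv_smul_smul₀ (Complex.ofReal_ne_zero.2 (by positivity))]
  obtain ⟨_, ⟨f, ξ, hf, hmaps, hf0, rfl, rfl⟩, hξr⟩ := exists_lt_of_csInf_lt (by
    exact ⟨_, _, _, hunit.differentiableOn, hunit.mapsTo, hunit.map_zero, hderiv, rfl⟩) hr
  have hf' : IsHolDisc D 1 f x (derivWithin f (ball 0 1) 0) :=
    ⟨hf, hmaps, hf0, (hf 0 (mem_ball_self one_pos)).hasDerivWithinAt.hasDerivAt
      (ball_mem_nhds 0 one_pos)⟩
  obtain ⟨q, hξq, hqr⟩ := exists_between hξr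
  have hq0 : 0 < q := (norm_nonneg ξ).trans_lt hξq
  refine ⟨q⁻¹, _, (inv_lt_inv₀ hr0 hq0).2 hqr, hf'.comp_mul fun ζ hζ => ?_⟩
  rw [mem_ball_zero_iff] at hζ ⊢
  calc ‖ξ * ζ‖ = ‖ξ‖ * ‖ζ‖ := norm_mul ξ ζ
    _ ≤ q * ‖ζ‖ := by gcongr
    _ < q * q⁻¹ := by gcongr
    _ = 1 := mul_inv_cancel₀ hq0.ne'

theorem kobMetric_le_norm_div (hr : 0 < r) (hD : ball x r ⊆ D) : kobMetric D x v ≤ ‖v‖ / r := by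
  refine le_of_forall_gt_imp_ge_of_dense fun s hs => ?_
  have hs0 : 0 < s := (by positivity : 0 ≤ ‖v‖ / r).trans_lt hs
  rw [div_lt_iff₀ hr] at hs
  rw [← inv_inv s]
  refine (isHolDisc_affine (v := v) hr hD ?_).kobMetric_le (inv_pos.2 hs0)
  rw [inv_mul_le_iff₀ hs0]
  exact hs.le

theorem kobMetric_map_le {D' : Set F} {Φ : E → F} {Φ' : E →L[ℂ] F}
    (hD : IsOpen D) (hx : x ∈ D) (hΦ : DifferentiableOn ℂ Φ D) (hmaps : MapsTo Φ D D')
    (hΦ' : HasFDerivAt Φ Φ' x) : kobMetric D' (Φ x) (Φ' v) ≤ kobMetric D x v := by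
  refine le_of_forall_gt_imp_ge_of_dense fun s hs => ?_
  have hs0 : 0 < s := (kobMetric_nonneg D x v).trans_lt hs
  obtain ⟨R, f, hR, hf⟩ := exists_isHolDisc_of_kobMetric_lt (hD.mem_nhds hx) hs
  have hR0 : 0 < R := (inv_pos.2 hs0).trans hR
  have hΦf : IsHolDisc D' R (Φ ∘ f) (Φ x) (Φ' v) :=
    ⟨hΦ.comp hf.differentiableOn hf.mapsTo, hmaps.comp hf.mapsTo, congrArg Φ hf.map_zero,
      hΦ'.comp_hasDerivAt_of_eq 0 hf.hasDerivAt hf.map_zero.symm⟩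
  exact (hΦf.kobMetric_le hR0).trans (inv_le_of_inv_le₀ hs0 hR.le)

theorem kobMetric_neg (D : Set E) (x v : E) : kobMetric D x (-v) = kobMetric D x v := by
  unfold kobMetric
  congr 1
  ext r
  constructor
  · rintro ⟨f, ξ, hf, hmaps, hf0, hξ, rfl⟩
    exact ⟨f, -ξ, hf, hmaps, hf0, by rw [neg_smul, hξ, neg_neg], (norm_neg ξ).symm⟩
  · rintro ⟨f, ξ, hf, hmaps, hf0, hξ, rfl⟩
    exact ⟨f, -ξ, hf, hmaps, hf0, by rw [neg_smul, hξ], (norm_neg ξ).symm⟩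

theorem add_conj_ne_zero_of_re_pos {w z : ℂ} (hw : 0 < w.re) (hz : 0 < z.re) :
    w + conj z ≠ 0 := fun h => by
  have hre : w.re + z.re = 0 := by simpa using congrArg Complex.re h
  linarith

theorem norm_sub_div_add_conj_le_one {w z : ℂ} (hw : 0 < w.re) (hz : 0 < z.re) :
    ‖(w - z) / (w + conj z)‖ ≤ 1 := by
  rw [norm_div, div_le_one (norm_pos_iff.2 (add_conj_ne_zero_of_re_pos hw hz))]
  refine le_of_sq_le_sq ?_ (norm_nonneg _)
  rw [← Complex.normSq_eq_norm_sq, ← Complex.normSq_eq_norm_sq]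
  simp only [Complex.normSq_apply, Complex.add_re, Complex.add_im, Complex.sub_re,
    Complex.sub_im, Complex.conj_re, Complex.conj_im]
  nlinarith [mul_pos hw hz]

theorem IsHolDisc.norm_le_two_mul_re_div {f : ℂ → ℂ} {z w : ℂ} (hR : 0 < R)
    (hf : IsHolDisc {z : ℂ | 0 < z.re} R f z w) : ‖w‖ ≤ 2 * z.re / R := by
  have h0 : (0 : ℂ) ∈ ball (0 : ℂ) R := mem_ball_self hR
  have hz : 0 < z.re := hf.map_zero ▸ hf.mapsTo h0
  have hden : ∀ ζ ∈ ball (0 : ℂ) R, f ζ + conj z ≠ 0 :=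
    fun ζ hζ => add_conj_ne_zero_of_re_pos (hf.mapsTo hζ) hz
  -- Schwarz's lemma for the Cayley transform of `f`, a self-map of the unit disc fixing `0`
  set G : ℂ → ℂ := (fun ζ => f ζ - z) / fun ζ => f ζ + conj z
  have hG0 : G 0 = 0 := by
    simp only [G, Pi.div_apply, hf.map_zero, sub_self, zero_div]
  have hGdiff : DifferentiableOn ℂ G (ball 0 R) :=
    (hf.differentiableOn.sub_const z).div (hf.differentiableOn.add_const (conj z)) hden
  have hGmaps : MapsTo G (ball 0 R) (closedBall (G 0) 1) := fun ζ hζ => by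
    rw [hG0, mem_closedBall_zero_iff]
    exact norm_sub_div_add_conj_le_one (hf.mapsTo hζ) hz
  have hGderiv : deriv G 0 = w / ((2 * z.re : ℝ) : ℂ) := by
    have hne : z + conj z ≠ 0 := add_conj_ne_zero_of_re_pos hz hz
    rw [((hf.hasDerivAt.sub_const z).div (hf.hasDerivAt.add_const (conj z)) (hden 0 h0)).deriv,
      hf.map_zero, ← Complex.add_conj]
    field_simp
    ring
  have hschwarz := Complex.norm_deriv_le_div_of_mapsTo_ball hGdiff hGmaps hR
  rw [hGderiv, norm_div, Complex.norm_real, Real.norm_of_nonneg (by positivity),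
    div_le_iff₀ (by positivity)] at hschwarz
  exact hschwarz.trans_eq (by ring)

theorem norm_div_two_mul_re_le_kobMetric {z : ℂ} (hz : 0 < z.re) (w : ℂ) :
    ‖w‖ / (2 * z.re) ≤ kobMetric {z : ℂ | 0 < z.re} z w := by
  refine le_of_forall_gt_imp_ge_of_dense fun s hs => ?_
  have hs0 : 0 < s := (kobMetric_nonneg _ z w).trans_lt hs
  obtain ⟨R, f, hR, hf⟩ := exists_isHolDisc_of_kobMetric_lt
    ((isOpen_lt continuous_const Complex.continuous_re).mem_nhds hz) hs
  have hR0 : 0 < R := (inv_pos.2 hs0).trans hR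
  rw [div_le_iff₀ (by positivity)]
  calc ‖w‖ ≤ R⁻¹ * (2 * z.re) := (hf.norm_le_two_mul_re_div hR0).trans_eq (div_eq_inv_mul _ _)
    _ ≤ s * (2 * z.re) := by gcongr; exact inv_le_of_inv_le₀ hs0 hR.le

theorem norm_add_sq_mul_lt {a q : ℂ} (hR : 0 < R) (ha : ‖a‖ < R) (hq : R * ‖q‖ < 1) :
    ‖a + R ^ 2 * q‖ < R * ‖1 + conj a * q‖ := by
  refine lt_of_pow_lt_pow_left₀ 2 (by positivity) ?_
  have hdiff : (R * ‖1 + conj a * q‖) ^ 2 - ‖a + R ^ 2 * q‖ ^ 2 =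
      (R ^ 2 - ‖a‖ ^ 2) * (1 - (R * ‖q‖) ^ 2) := by
    simp only [mul_pow, ← Complex.normSq_eq_norm_sq]
    simp only [Complex.normSq_apply, ← Complex.ofReal_pow, Complex.add_re, Complex.add_im,
      Complex.mul_re, Complex.mul_im, Complex.conj_re, Complex.conj_im, Complex.one_re,
      Complex.one_im, Complex.ofReal_re, Complex.ofReal_im]
    ring
  have ha' : 0 < R ^ 2 - ‖a‖ ^ 2 := sub_pos.2 (by gcongr)
  have hq' : 0 < 1 - (R * ‖q‖) ^ 2 := sub_pos.2 (pow_lt_one₀ (by positivity) hq two_ne_zero)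
  linarith [mul_pos ha' hq']

theorem isHolDisc_moebius {D : Set ℂ} {c a : ℂ} (hD : ball c R ⊆ D) (ha : ‖a‖ < R) :
    IsHolDisc D ((R ^ 2 - ‖a‖ ^ 2) / R)
      ((fun _ => c) + (fun ζ => a + R ^ 2 * (ζ / ((R ^ 2 - ‖a‖ ^ 2 : ℝ) : ℂ))) /
        fun ζ => 1 + conj a * (ζ / ((R ^ 2 - ‖a‖ ^ 2 : ℝ) : ℂ))) (c + a) 1 := by
  have hR : 0 < R := (norm_nonneg a).trans_lt ha
  have hd : 0 < R ^ 2 - ‖a‖ ^ 2 := sub_pos.2 (by gcongr)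
  have hdC : (R : ℂ) ^ 2 - a * conj a = ((R ^ 2 - ‖a‖ ^ 2 : ℝ) : ℂ) := by
    rw [Complex.mul_conj, Complex.normSq_eq_norm_sq]
    push_cast
    rfl
  set d : ℝ := R ^ 2 - ‖a‖ ^ 2
  have hlt : ∀ ζ ∈ ball (0 : ℂ) (d / R),
      ‖a + R ^ 2 * (ζ / d)‖ < R * ‖1 + conj a * (ζ / d)‖ := fun ζ hζ => by
    refine norm_add_sq_mul_lt hR ha ?_
    rw [norm_div, Complex.norm_real, Real.norm_of_nonneg hd.le, ← mul_div_assoc, div_lt_one hd,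
      mul_comm]
    exact (lt_div_iff₀ hR).1 (mem_ball_zero_iff.1 hζ)
  have hden : ∀ ζ ∈ ball (0 : ℂ) (d / R), 1 + conj a * (ζ / d) ≠ 0 := fun ζ hζ h => by
    have := hlt ζ hζ
    rw [h, norm_zero, mul_zero] at this
    exact this.not_ge (norm_nonneg _)
  refine ⟨(differentiableOn_const c).add (.div (by fun_prop) (by fun_prop) hden),
    fun ζ hζ => hD ?_, by simp, ?_⟩
  · rw [mem_ball_iff_norm, Pi.add_apply, Pi.div_apply, add_sub_cancel_left, norm_div,
      div_lt_iff₀ (norm_pos_iff.2 (hden ζ hζ))]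
    exact hlt ζ hζ
  · have hq : HasDerivAt (fun ζ : ℂ => ζ / d) (1 / d) 0 := (hasDerivAt_id 0).div_const _
    have hquot := ((hq.const_mul ((R : ℂ) ^ 2)).const_add a).div
      ((hq.const_mul (conj a)).const_add 1) (by simp)
    have hone : ((R : ℂ) ^ 2 * (1 / d) * (1 + conj a * (0 / d)) - (a + R ^ 2 * (0 / d)) *
        (conj a * (1 / d))) / (1 + conj a * (0 / d)) ^ 2 = 1 := by
      have : (d : ℂ) ≠ 0 := Complex.ofReal_ne_zero.2 hd.ne'
      calc _ = ((R : ℂ) ^ 2 - a * conj a) / d := by simp; ring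
        _ = 1 := by rw [hdC, div_self this]
    rw [hone] at hquot
    simpa only [zero_add] using (hasDerivAt_const (0 : ℂ) c).add hquot

theorem kobMetric_one_le_of_ball_subset {D : Set ℂ} {c u : ℂ} (hD : ball c R ⊆ D)
    (hu : u ∈ ball c R) : kobMetric D u 1 ≤ R / (R ^ 2 - ‖u - c‖ ^ 2) := by
  rw [mem_ball_iff_norm] at hu
  have hR : 0 < R := (norm_nonneg _).trans_lt hu
  have hdisc := isHolDisc_moebius hD hu
  rw [add_sub_cancel] at hdisc
  have hd : 0 < R ^ 2 - ‖u - c‖ ^ 2 := sub_pos.2 (by gcongr)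
  exact (hdisc.kobMetric_le (div_pos hd hR)).trans_eq (inv_div _ _)

end HolomorphicDiscs

section UpperSemicontinuity

variable {E : Type*} [NormedAddCommGroup E] [NormedSpace ℂ E] {D : Set E}

theorem IsHolDisc.eventually_add_affine {R S : ℝ} {f : ℂ → E} {x v : E} (hD : IsOpen D)
    (hSR : S < R) (hf : IsHolDisc D R f x v) :
    ∀ᶠ p in 𝓝 (x, v), IsHolDisc D S (fun ζ => f ζ + ((p.1 - x) + ζ • (p.2 - v))) p.1 p.2 := by
  have hsub : closedBall (0 : ℂ) S ⊆ ball 0 R := closedBall_subset_ball hSR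
  obtain ⟨η, hη, hthick⟩ := ((isCompact_closedBall (0 : ℂ) S).image_of_continuousOn
    (hf.differentiableOn.continuousOn.mono hsub)).exists_thickening_subset_open hD
    (hf.mapsTo.mono_left hsub).image_subset
  have hsmall : ∀ᶠ p : E × E in 𝓝 (x, v), ‖p.1 - x‖ + S * ‖p.2 - v‖ < η := by
    have hcont : Continuous fun p : E × E => ‖p.1 - x‖ + S * ‖p.2 - v‖ := by fun_prop
    exact hcont.continuousAt.eventually_lt_const (by simpa using hη)
  filter_upwards [hsmall] with p hp
  refine ⟨?_, fun ζ hζ => hthick ?_, by simp [hf.map_zero], ?_⟩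
  · exact (hf.differentiableOn.mono (ball_subset_ball hSR.le)).add (by fun_prop)
  · refine mem_thickening_iff.2 ⟨f ζ, mem_image_of_mem f (ball_subset_closedBall hζ), ?_⟩
    rw [dist_eq_norm, add_sub_cancel_left]
    calc ‖p.1 - x + ζ • (p.2 - v)‖ ≤ ‖p.1 - x‖ + ‖ζ‖ * ‖p.2 - v‖ :=
          (norm_add_le _ _).trans_eq (by rw [norm_smul])
      _ ≤ ‖p.1 - x‖ + S * ‖p.2 - v‖ := by gcongr; exact (mem_ball_zero_iff.1 hζ).le
      _ < η := hp
  · have haff := ((hasDerivAt_id (0 : ℂ)).smul_const (p.2 - v)).const_add (p.1 - x)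
    rw [one_smul] at haff
    simpa only [add_sub_cancel, id] using hf.hasDerivAt.fun_add haff

theorem isOpen_setOf_kobMetric_lt (hD : IsOpen D) (r : ℝ) :
    IsOpen {p : E × E | p.1 ∈ D ∧ kobMetric D p.1 p.2 < r} := by
  refine isOpen_iff_mem_nhds.2 ?_
  rintro ⟨x, v⟩ ⟨hx : x ∈ D, hr : kobMetric D x v < r⟩
  have hr0 : 0 < r := (kobMetric_nonneg D x v).trans_lt hr
  obtain ⟨R, f, hrR, hf⟩ := exists_isHolDisc_of_kobMetric_lt (hD.mem_nhds hx) hr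
  obtain ⟨S, hrS, hSR⟩ := exists_between hrR
  have hS : 0 < S := (inv_pos.2 hr0).trans hrS
  filter_upwards [hf.eventually_add_affine hD hSR] with p hp
  exact ⟨hp.map_zero ▸ hp.mapsTo (mem_ball_self hS),
    (hp.kobMetric_le hS).trans_lt ((inv_lt_comm₀ hS hr0).2 hrS)⟩

theorem kobMetric_eq_zero_of_notMem {x : E} (hx : x ∉ D) (v : E) : kobMetric D x v = 0 := by
  refine (congrArg sInf (eq_empty_iff_forall_notMem.2 ?_)).trans Real.sInf_empty
  rintro _ ⟨f, ξ, -, hmaps, rfl, -⟩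
  exact hx (hmaps (mem_ball_self one_pos))

-- The Borel σ-algebra of `E × E` may exceed the product σ-algebra, as `E` may be nonseparable.
theorem measurable_kobMetric (hD : IsOpen D) :
    Measurable[borel (E × E)] fun p : E × E => kobMetric D p.1 p.2 := by
  let _ : MeasurableSpace (E × E) := borel (E × E)
  have _ : BorelSpace (E × E) := ⟨rfl⟩
  refine measurable_of_Iio fun r => ?_
  have hsplit : (fun p : E × E => kobMetric D p.1 p.2) ⁻¹' Iio r =
      {p | p.1 ∈ D ∧ kobMetric D p.1 p.2 < r} ∪ {p | p.1 ∉ D ∧ 0 < r} := by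
    ext p
    by_cases hp : p.1 ∈ D
    · simp [hp]
    · simp [hp, kobMetric_eq_zero_of_notMem hp]
  rw [hsplit]
  refine (isOpen_setOf_kobMetric_lt hD r).measurableSet.union (IsClosed.measurableSet ?_)
  exact (hD.isClosed_compl.preimage continuous_fst).inter isClosed_const

end UpperSemicontinuity

section AbsolutelyContinuousCurves

variable {E F : Type*} [NormedAddCommGroup E] [NormedSpace ℂ E] [NormedAddCommGroup F]
  [NormedSpace ℂ F] {σ g τ k : ℝ → E} {a b c : ℝ}

namespace IsACWithDeriv

theorem continuousOn (h : IsACWithDeriv σ g a b) (hab : a ≤ b) : ContinuousOn σ (Icc a b) := by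
  have hprim := intervalIntegral.continuousOn_primitive_interval' h.1 left_mem_uIcc
  rw [uIcc_of_le hab] at hprim
  exact (continuousOn_const.add hprim).congr h.2

theorem shift (h : IsACWithDeriv σ g a b) (s : ℝ) :
    IsACWithDeriv (fun t => σ (t + s)) (fun t => g (t + s)) (a - s) (b - s) := by
  refine ⟨h.1.comp_add_right s, fun t ht => ?_⟩
  beta_reduce
  rw [intervalIntegral.integral_comp_add_right, sub_add_cancel]
  exact h.2 _ ⟨sub_le_iff_le_add.1 ht.1, le_sub_iff_add_le.1 ht.2⟩

theorem reverse (h : IsACWithDeriv σ g a b) (hab : a ≤ b) :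
    IsACWithDeriv (fun t => σ (-t)) (fun t => -g (-t)) (-b) (-a) := by
  refine ⟨((IntervalIntegrable.iff_comp_neg).1 h.1).symm.neg, fun t ht => ?_⟩
  have ht' : -t ∈ Icc a b := ⟨le_neg.1 ht.2, neg_le.1 ht.1⟩
  have hsub : IntervalIntegrable g volume a (-t) :=
    h.1.mono_set (uIcc_subset_uIcc_left (Icc_subset_uIcc ht'))
  beta_reduce
  rw [intervalIntegral.integral_neg, intervalIntegral.integral_comp_neg, neg_neg, h.2 _ ht',
    h.2 b ⟨hab, le_rfl⟩, ← intervalIntegral.integral_interval_sub_left h.1 hsub]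
  abel

theorem congr (h : IsACWithDeriv σ g a b) (hab : a ≤ b) (hτ : EqOn σ τ (Icc a b))
    (hk : EqOn g k (Ioc a b)) : IsACWithDeriv τ k a b := by
  refine ⟨h.1.congr ?_, fun t ht => ?_⟩
  · rwa [uIoc_of_le hab]
  · rw [← hτ ht, ← hτ (left_mem_Icc.2 hab), h.2 t ht]
    congr 1
    refine intervalIntegral.integral_congr_ae (.of_forall fun s hs => ?_)
    rw [uIoc_of_le ht.1] at hs
    exact hk ⟨hs.1, hs.2.trans ht.2⟩

theorem trans (hab : a ≤ b) (h : IsACWithDeriv σ g a b)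
    (h' : IsACWithDeriv σ g b c) : IsACWithDeriv σ g a c := by
  refine ⟨h.1.trans h'.1, fun t ht => ?_⟩
  rcases le_total t b with htb | hbt
  · exact h.2 t ⟨ht.1, htb⟩
  · have hsub : IntervalIntegrable g volume b t :=
      h'.1.mono_set (uIcc_subset_uIcc_left (Icc_subset_uIcc ⟨hbt, ht.2⟩))
    rw [h'.2 t ⟨hbt, ht.2⟩, h.2 b ⟨hab, le_rfl⟩, add_assoc,
      intervalIntegral.integral_add_adjacent_intervals h.1 hsub]

theorem map [CompleteSpace E] [CompleteSpace F] (h : IsACWithDeriv σ g a b)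
    (L : E →L[ℝ] F) (q : F) : IsACWithDeriv (fun t => q + L (σ t)) (fun t => L (g t)) a b := by
  refine ⟨⟨L.integrable_comp h.1.1, L.integrable_comp h.1.2⟩, fun t ht => ?_⟩
  have hsub : IntervalIntegrable g volume a t :=
    h.1.mono_set (uIcc_subset_uIcc_left (Icc_subset_uIcc ht))
  beta_reduce
  rw [h.2 t ht, map_add, L.intervalIntegral_comp_comm hsub, add_assoc]

end IsACWithDeriv

end AbsolutelyContinuousCurves

section KobayashiLength

variable {E F : Type*} [NormedAddCommGroup E] [NormedSpace ℂ E] [NormedAddCommGroup F]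
  [NormedSpace ℂ F] {D : Set E} {σ g τ k : ℝ → E} {a b c r : ℝ} {x y z : E}

/-- The Kobayashi length over `[a, b]` of the curve `σ` with a.e. derivative `g`. -/
noncomputable def kobLength (D : Set E) (σ g : ℝ → E) (a b : ℝ) : ℝ :=
  ∫ t in a..b, kobMetric D (σ t) (g t)

/-- `σ : [a, b] → D` is an absolutely continuous curve from `x` to `y` with a.e. derivative `g`. -/
structure IsACCurve (D : Set E) (σ g : ℝ → E) (a b : ℝ) (x y : E) : Prop where
  le : a ≤ b
  isACWithDeriv : IsACWithDeriv σ g a b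
  mapsTo : MapsTo σ (Icc a b) D
  left : σ a = x
  right : σ b = y

/-- `x` and `y` are joined by an absolutely continuous curve in `D`. Without this, `kobDist D x y`
is the junk value `sInf ∅ = 0`. -/
def ACJoinedIn (D : Set E) (x y : E) : Prop :=
  ∃ (σ g : ℝ → E) (a b : ℝ), IsACCurve D σ g a b x y

theorem kobDist_eq_sInf (D : Set E) (x y : E) :
    kobDist D x y = sInf {r | ∃ (σ g : ℝ → E) (a b : ℝ),
      IsACCurve D σ g a b x y ∧ kobLength D σ g a b = r} := by
  refine congrArg sInf (Set.ext fun r => ⟨?_, ?_⟩)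
  · rintro ⟨a, b, σ, g, hab, hac, hmaps, hx, hy, rfl⟩
    exact ⟨σ, g, a, b, ⟨hab, hac, hmaps, hx, hy⟩, rfl⟩
  · rintro ⟨σ, g, a, b, h, rfl⟩
    exact ⟨a, b, σ, g, h.le, h.isACWithDeriv, h.mapsTo, h.left, h.right, rfl⟩

theorem kobLength_nonneg (hab : a ≤ b) : 0 ≤ kobLength D σ g a b :=
  intervalIntegral.integral_nonneg hab fun _ _ => kobMetric_nonneg _ _ _

theorem kobLength_congr (hab : a ≤ b) (hσ : EqOn σ τ (Icc a b)) (hg : EqOn g k (Ioc a b)) :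
    kobLength D σ g a b = kobLength D τ k a b := by
  refine intervalIntegral.integral_congr_ae (.of_forall fun t ht => ?_)
  rw [uIoc_of_le hab] at ht
  rw [hσ (Ioc_subset_Icc_self ht), hg ht]

theorem kobLength_shift (D : Set E) (σ g : ℝ → E) (a b s : ℝ) :
    kobLength D (fun t => σ (t + s)) (fun t => g (t + s)) (a - s) (b - s) =
      kobLength D σ g a b := by
  unfold kobLength
  rw [intervalIntegral.integral_comp_add_right fun t => kobMetric D (σ t) (g t), sub_add_cancel,
    sub_add_cancel]

theorem kobLength_reverse (D : Set E) (σ g : ℝ → E) (a b : ℝ) :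
    kobLength D (fun t => σ (-t)) (fun t => -g (-t)) (-b) (-a) = kobLength D σ g a b := by
  unfold kobLength
  simp only [kobMetric_neg]
  rw [intervalIntegral.integral_comp_neg fun t => kobMetric D (σ t) (g t), neg_neg, neg_neg]

namespace IsACCurve

theorem intervalIntegrable_kobMetric (hD : IsOpen D) (h : IsACCurve D σ g a b x y) :
    IntervalIntegrable (fun t => kobMetric D (σ t) (g t)) volume a b := by
  have hσ := h.isACWithDeriv.continuousOn h.le
  obtain ⟨η, hη, hthick⟩ := (isCompact_Icc.image_of_continuousOn hσ).exists_thickening_subset_open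
    hD h.mapsTo.image_subset
  rw [intervalIntegrable_iff_integrableOn_Ioc_of_le h.le]
  have hg := (intervalIntegrable_iff_integrableOn_Ioc_of_le h.le).1 h.isACWithDeriv.1
  have hmeas : AEStronglyMeasurable (fun t => kobMetric D (σ t) (g t))
      (volume.restrict (Ioc a b)) := by
    let _ : MeasurableSpace (E × E) := borel (E × E)
    have _ : BorelSpace (E × E) := ⟨rfl⟩
    have hσmeas : AEStronglyMeasurable σ (volume.restrict (Ioc a b)) :=
      (hσ.mono Ioc_subset_Icc_self).aestronglyMeasurable measurableSet_Ioc
    have hpair := hσmeas.prodMk hg.aestronglyMeasurable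
    exact ((measurable_kobMetric hD).comp_aemeasurable hpair.aemeasurable).aestronglyMeasurable
  refine Integrable.mono' (hg.norm.div_const η) hmeas ?_
  filter_upwards [ae_restrict_mem measurableSet_Ioc] with t ht
  rw [Real.norm_of_nonneg (kobMetric_nonneg _ _ _)]
  exact kobMetric_le_norm_div hη <| (ball_subset_thickening
    (mem_image_of_mem σ (Ioc_subset_Icc_self ht)) η).trans hthick

theorem kobDist_le (h : IsACCurve D σ g a b x y) : kobDist D x y ≤ kobLength D σ g a b := by
  rw [kobDist_eq_sInf]
  refine csInf_le ⟨0, ?_⟩ ⟨σ, g, a, b, h, rfl⟩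
  rintro _ ⟨σ, g, a, b, h, rfl⟩
  exact kobLength_nonneg h.le

theorem shift (h : IsACCurve D σ g a b x y) (s : ℝ) :
    IsACCurve D (fun t => σ (t + s)) (fun t => g (t + s)) (a - s) (b - s) x y where
  le := sub_le_sub_right h.le s
  isACWithDeriv := h.isACWithDeriv.shift s
  mapsTo t ht := h.mapsTo ⟨sub_le_iff_le_add.1 ht.1, le_sub_iff_add_le.1 ht.2⟩
  left := by rw [sub_add_cancel, h.left]
  right := by rw [sub_add_cancel, h.right]

theorem reverse (h : IsACCurve D σ g a b x y) :
    IsACCurve D (fun t => σ (-t)) (fun t => -g (-t)) (-b) (-a) y x where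
  le := neg_le_neg h.le
  isACWithDeriv := h.isACWithDeriv.reverse h.le
  mapsTo t ht := h.mapsTo ⟨le_neg.1 ht.2, neg_le.1 ht.1⟩
  left := by rw [neg_neg, h.right]
  right := by rw [neg_neg, h.left]

theorem congr (h : IsACCurve D σ g a b x y) (hτ : EqOn σ τ (Icc a b)) (hk : EqOn g k (Ioc a b)) :
    IsACCurve D τ k a b x y where
  le := h.le
  isACWithDeriv := h.isACWithDeriv.congr h.le hτ hk
  mapsTo := h.mapsTo.congr hτ
  left := (hτ (left_mem_Icc.2 h.le)).symm.trans h.left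
  right := (hτ (right_mem_Icc.2 h.le)).symm.trans h.right

theorem trans (h : IsACCurve D σ g a b x y) (h' : IsACCurve D σ g b c y z) :
    IsACCurve D σ g a c x z where
  le := h.le.trans h'.le
  isACWithDeriv := h.isACWithDeriv.trans h.le h'.isACWithDeriv
  mapsTo := by
    rw [← Icc_union_Icc_eq_Icc h.le h'.le]
    exact h.mapsTo.union h'.mapsTo
  left := h.left
  right := h'.right

end IsACCurve

theorem exists_isACCurve_kobLength_lt (hxy : ACJoinedIn D x y) (hr : kobDist D x y < r) :
    ∃ (σ g : ℝ → E) (a b : ℝ), IsACCurve D σ g a b x y ∧ kobLength D σ g a b < r := by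
  obtain ⟨σ₀, g₀, a₀, b₀, h₀⟩ := hxy
  rw [kobDist_eq_sInf] at hr
  obtain ⟨_, ⟨σ, g, a, b, h, rfl⟩, hlt⟩ :=
    exists_lt_of_csInf_lt (by exact ⟨_, σ₀, g₀, a₀, b₀, h₀, rfl⟩) hr
  exact ⟨σ, g, a, b, h, hlt⟩

theorem exists_isACCurve_concat (hD : IsOpen D) {a' b' : ℝ} (h : IsACCurve D σ g a b x y)
    (h' : IsACCurve D τ k a' b' y z) :
    ∃ (ρ m : ℝ → E) (c : ℝ), IsACCurve D ρ m a c x z ∧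
      kobLength D ρ m a c = kobLength D σ g a b + kobLength D τ k a' b' := by
  have hs := h'.shift (a' - b)
  have hls := kobLength_shift D τ k a' b' (a' - b)
  rw [sub_sub_cancel] at hs hls
  set τ' := fun t => τ (t + (a' - b))
  set k' := fun t => k (t + (a' - b))
  set c := b' - (a' - b)
  have hσ₁ : EqOn σ ((Iic b).piecewise σ τ') (Icc a b) := fun t ht =>
    (piecewise_eq_of_mem (Iic b) _ _ ht.2).symm
  have hg₁ : EqOn g ((Iic b).piecewise g k') (Ioc a b) := fun t ht =>
    (piecewise_eq_of_mem (Iic b) _ _ ht.2).symm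
  have hσ₂ : EqOn τ' ((Iic b).piecewise σ τ') (Icc b c) := fun t ht => by
    rcases ht.1.eq_or_lt with rfl | hbt
    · rw [piecewise_eq_of_mem (Iic b) _ _ self_mem_Iic, hs.left, h.right]
    · exact (piecewise_eq_of_notMem (Iic b) _ _ hbt.not_ge).symm
  have hg₂ : EqOn k' ((Iic b).piecewise g k') (Ioc b c) := fun t ht =>
    (piecewise_eq_of_notMem (Iic b) _ _ ht.1.not_ge).symm
  have h₁ := h.congr hσ₁ hg₁
  have h₂ := hs.congr hσ₂ hg₂
  refine ⟨_, _, c, h₁.trans h₂, ?_⟩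
  rw [← hls, kobLength_congr h.le hσ₁ hg₁, kobLength_congr hs.le hσ₂ hg₂]
  exact (intervalIntegral.integral_add_adjacent_intervals (h₁.intervalIntegrable_kobMetric hD)
    (h₂.intervalIntegrable_kobMetric hD)).symm

theorem kobDist_symm (D : Set E) (x y : E) : kobDist D x y = kobDist D y x := by
  rw [kobDist_eq_sInf, kobDist_eq_sInf]
  congr 1
  ext r
  constructor <;> rintro ⟨σ, g, a, b, h, rfl⟩ <;>
    exact ⟨_, _, _, _, h.reverse, kobLength_reverse D σ g a b⟩

theorem kobDist_triangle (hD : IsOpen D) (hxy : ACJoinedIn D x y) (hyz : ACJoinedIn D y z) :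
    kobDist D x z ≤ kobDist D x y + kobDist D y z := by
  refine le_of_forall_pos_le_add fun e he => ?_
  obtain ⟨σ, g, a, b, h, hlt⟩ :=
    exists_isACCurve_kobLength_lt hxy (lt_add_of_pos_right _ (half_pos he))
  obtain ⟨τ, k, a', b', h', hlt'⟩ :=
    exists_isACCurve_kobLength_lt hyz (lt_add_of_pos_right _ (half_pos he))
  obtain ⟨ρ, m, c, hρ, hlength⟩ := exists_isACCurve_concat hD h h'
  linarith [hρ.kobDist_le]

variable [CompleteSpace E]

theorem kobDist_map_le [CompleteSpace F] {D' : Set F} (hD : IsOpen D) (hD' : IsOpen D')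
    (L : E →L[ℂ] F) (q : F) (hmaps : MapsTo (fun p => q + L p) D D') (hxy : ACJoinedIn D x y) :
    kobDist D' (q + L x) (q + L y) ≤ kobDist D x y := by
  refine le_of_forall_gt_imp_ge_of_dense fun s hs => ?_
  obtain ⟨σ, g, a, b, h, hlt⟩ := exists_isACCurve_kobLength_lt hxy hs
  have hΦ : IsACCurve D' (fun t => q + L (σ t)) (fun t => L (g t)) a b (q + L x) (q + L y) :=
    ⟨h.le, h.isACWithDeriv.map (L.restrictScalars ℝ) q, hmaps.comp h.mapsTo,
      by rw [h.left], by rw [h.right]⟩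
  refine (hΦ.kobDist_le.trans ?_).trans hlt.le
  refine intervalIntegral.integral_mono_on h.le (hΦ.intervalIntegrable_kobMetric hD')
    (h.intervalIntegrable_kobMetric hD) fun t ht => ?_
  exact kobMetric_map_le hD (h.mapsTo ht) (by fun_prop) hmaps (L.hasFDerivAt.const_add q)

theorem isACCurve_line (v : E) (hab : a ≤ b) (hD : ∀ t ∈ Icc a b, x + t • v ∈ D) :
    IsACCurve D (fun t => x + t • v) (fun _ => v) a b (x + a • v) (x + b • v) where
  le := hab
  isACWithDeriv := by
    refine ⟨intervalIntegrable_const, fun t _ => ?_⟩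
    rw [intervalIntegral.integral_const, sub_smul, add_add_sub_cancel]
  mapsTo := hD
  left := rfl
  right := rfl

theorem kobDist_line_le {B : ℝ → ℝ} (v : E) (hab : a ≤ b) (hD : ∀ t ∈ Icc a b, x + t • v ∈ D)
    (hB : IntervalIntegrable B volume a b) (hle : ∀ t ∈ Icc a b, kobMetric D (x + t • v) v ≤ B t) :
    kobDist D (x + a • v) (x + b • v) ≤ ∫ t in a..b, B t := by
  refine (isACCurve_line v hab hD).kobDist_le.trans ?_
  unfold kobLength
  rw [intervalIntegral.integral_of_le hab, intervalIntegral.integral_of_le hab]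
  refine integral_mono_of_nonneg (.of_forall fun t => kobMetric_nonneg _ _ _)
    ((intervalIntegrable_iff_integrableOn_Ioc_of_le hab).1 hB) ?_
  filter_upwards [ae_restrict_mem measurableSet_Ioc] with t ht
  exact hle t (Ioc_subset_Icc_self ht)

theorem acJoinedIn_of_convex (hD : Convex ℝ D) (hx : x ∈ D) (hy : y ∈ D) : ACJoinedIn D x y := by
  have h := isACCurve_line (y - x) zero_le_one fun t ht => hD.add_smul_sub_mem hx hy ht
  rw [zero_smul, add_zero, one_smul, add_sub_cancel] at h
  exact ⟨_, _, _, _, h⟩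

theorem kobDist_le_norm_sub_div (hD : Convex ℝ D) (hr : 0 < r) (hx : ball x r ⊆ D)
    (hy : ball y r ⊆ D) : kobDist D x y ≤ ‖y - x‖ / r := by
  have hball : ∀ t ∈ Icc (0 : ℝ) 1, ball (x + t • (y - x)) r ⊆ D := fun t ht p hp => by
    rw [mem_ball_iff_norm] at hp
    set u := p - (x + t • (y - x)) with hu
    have hxu : x + u ∈ D := hx (by rwa [mem_ball_iff_norm, add_sub_cancel_left])
    have hyu : y + u ∈ D := hy (by rwa [mem_ball_iff_norm, add_sub_cancel_left])
    convert hD.add_smul_sub_mem hxu hyu ht using 1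
    rw [hu, add_sub_add_right_eq_sub]
    abel
  have hline := kobDist_line_le (B := fun _ => ‖y - x‖ / r) (y - x) zero_le_one
    (fun t ht => hball t ht (mem_ball_self hr)) intervalIntegrable_const
    fun t ht => kobMetric_le_norm_div hr (hball t ht)
  simpa using hline

end KobayashiLength

section AbsolutelyContinuousLog

theorem absolutelyContinuousOnInterval_comp_of_lipschitzOnWith {X Y : Type*} [PseudoMetricSpace X]
    [PseudoMetricSpace Y] {f : ℝ → X} {φ : X → Y} {s : Set X} {K : NNReal} {a b : ℝ}
    (hφ : LipschitzOnWith K φ s) (hmaps : MapsTo f (uIcc a b) s)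
    (hf : AbsolutelyContinuousOnInterval f a b) :
    AbsolutelyContinuousOnInterval (fun t => φ (f t)) a b := by
  unfold AbsolutelyContinuousOnInterval at hf ⊢
  have hK := hf.const_mul (K : ℝ)
  rw [mul_zero] at hK
  refine squeeze_zero' (.of_forall fun I => Finset.sum_nonneg fun i _ => dist_nonneg) ?_ hK
  refine eventually_inf_principal.2 (.of_forall fun I hI => ?_)
  rw [Finset.mul_sum]
  exact Finset.sum_le_sum fun i hi =>
    hφ.dist_le_mul _ (hmaps (hI.1 i hi).1) _ (hmaps (hI.1 i hi).2)

theorem lipschitzOnWith_log_Ici {m : ℝ} (hm : 0 < m) :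
    LipschitzOnWith m⁻¹.toNNReal Real.log (Ici m) := by
  refine Convex.lipschitzOnWith_of_nnnorm_deriv_le (𝕜 := ℝ)
    (fun t ht => Real.differentiableAt_log (hm.trans_le ht).ne') (fun t ht => ?_) (convex_Ici m)
  rw [← NNReal.coe_le_coe, coe_nnnorm, Real.deriv_log, norm_inv,
    Real.norm_of_nonneg (hm.le.trans ht), Real.coe_toNNReal _ (inv_nonneg.2 hm.le)]
  exact inv_anti₀ hm ht

theorem log_sub_log_le_integral {H φ B : ℝ → ℝ} {a b : ℝ} (hab : a ≤ b)
    (hφ : IntervalIntegrable φ volume a b) (hB : IntervalIntegrable B volume a b)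
    (hH : ∀ t ∈ Icc a b, H t = H a + ∫ s in a..t, φ s) (hpos : ∀ t ∈ Icc a b, 0 < H t)
    (hle : ∀ t ∈ Icc a b, φ t / H t ≤ B t) :
    Real.log (H b) - Real.log (H a) ≤ ∫ t in a..b, B t := by
  set P : ℝ → ℝ := fun t => H a + ∫ s in a..t, φ s
  have hPac : AbsolutelyContinuousOnInterval P a b :=
    (LipschitzWith.const (H a)).lipschitzOnWith.absolutelyContinuousOnInterval.add
      (hφ.absolutelyContinuousOnInterval_intervalIntegral left_mem_uIcc)
  have hPcont := hPac.continuousOn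
  rw [uIcc_of_le hab] at hPcont
  obtain ⟨t₀, ht₀, hmin⟩ := isCompact_Icc.exists_isMinOn (nonempty_Icc.2 hab) hPcont
  have hPpos : ∀ t ∈ Icc a b, 0 < P t := fun t ht => (hpos t ht).trans_eq (hH t ht)
  have hmaps : MapsTo P (uIcc a b) (Ici (P t₀)) := by
    rw [uIcc_of_le hab]
    exact fun t ht => hmin ht
  have hlog := absolutelyContinuousOnInterval_comp_of_lipschitzOnWith
    (lipschitzOnWith_log_Ici (hPpos t₀ ht₀)) hmaps hPac
  rw [hH a (left_mem_Icc.2 hab), hH b (right_mem_Icc.2 hab), ← hlog.integral_deriv_eq_sub]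
  refine intervalIntegral.integral_mono_ae_restrict hab hlog.intervalIntegrable_deriv hB ?_
  filter_upwards [ae_restrict_mem measurableSet_Icc,
    ae_restrict_of_ae hφ.ae_hasDerivAt_integral] with t ht hderiv
  have hP : HasDerivAt P (φ t) t :=
    (hderiv (by rwa [uIcc_of_le hab]) a left_mem_uIcc).const_add _
  rw [(hP.log (hPpos t ht).ne').deriv]
  exact (congrArg (φ t / ·) (hH t ht)).symm.trans_le (hle t ht)

end AbsolutelyContinuousLog

section LowerBound

theorem IsACCurve.log_re_sub_log_re_div_two_le_kobLength {σ g : ℝ → ℂ} {a b : ℝ} {z w : ℂ}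
    (h : IsACCurve {z : ℂ | 0 < z.re} σ g a b z w) :
    (Real.log w.re - Real.log z.re) / 2 ≤ kobLength {z : ℂ | 0 < z.re} σ g a b := by
  have hopen : IsOpen {z : ℂ | 0 < z.re} := isOpen_lt continuous_const Complex.continuous_re
  have hg := h.isACWithDeriv.1
  have hgre : IntervalIntegrable (fun t => (g t).re) volume a b := ⟨hg.1.re, hg.2.re⟩
  have hre : ∀ t ∈ Icc a b, (σ t).re = (σ a).re + ∫ s in a..t, (g s).re := fun t ht => by
    have hgt : IntervalIntegrable g volume a t :=
      hg.mono_set (uIcc_subset_uIcc_left (Icc_subset_uIcc ht))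
    rw [h.isACWithDeriv.2 t ht, Complex.add_re]
    exact congrArg _ (Complex.reCLM.intervalIntegral_comp_comm hgt).symm
  rw [div_le_iff₀ two_pos, kobLength, ← intervalIntegral.integral_mul_const, ← h.left, ← h.right]
  refine log_sub_log_le_integral h.le hgre ((h.intervalIntegrable_kobMetric hopen).mul_const 2)
    hre h.mapsTo fun t ht => ?_
  have hpos : 0 < (σ t).re := h.mapsTo ht
  calc (g t).re / (σ t).re ≤ ‖g t‖ / (σ t).re := by gcongr; exact Complex.re_le_norm _
    _ = ‖g t‖ / (2 * (σ t).re) * 2 := by field_simp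
    _ ≤ _ := by gcongr; exact norm_div_two_mul_re_le_kobMetric hpos _

theorem log_re_sub_log_re_div_two_le_kobDist {z w : ℂ} (hz : 0 < z.re) (hw : 0 < w.re) :
    (Real.log w.re - Real.log z.re) / 2 ≤ kobDist {z : ℂ | 0 < z.re} z w := by
  refine le_of_forall_gt_imp_ge_of_dense fun s hs => ?_
  obtain ⟨σ, g, a, b, h, hlt⟩ := exists_isACCurve_kobLength_lt
    (acJoinedIn_of_convex (convex_halfSpace_re_gt 0) hz hw) hs
  exact h.log_re_sub_log_re_div_two_le_kobLength.trans hlt.le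

theorem opNorm_mul_le_of_forall_mem_ball {E : Type*} [NormedAddCommGroup E] [NormedSpace ℝ E]
    {Λ : E →L[ℝ] ℝ} {o : E} {r κ : ℝ} (hr : 0 < r) (hΛ : ∀ y ∈ ball o r, Λ y ≤ κ) :
    ‖Λ‖ * r ≤ κ - Λ o := by
  by_contra! hlt
  obtain ⟨v, hv, hΛv⟩ := Λ.exists_lt_apply_of_lt_opNorm ((div_lt_iff₀ hr).2 hlt)
  rw [div_lt_iff₀ hr, Real.norm_eq_abs, ← abs_of_pos hr, ← abs_mul, mul_comm] at hΛv
  have hmem : ∀ c : ℝ, |c| = r → o + c • v ∈ ball o r := fun c hc => by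
    rw [mem_ball_iff_norm, add_sub_cancel_left, norm_smul, Real.norm_eq_abs, hc]
    exact mul_lt_of_lt_one_right hr hv
  have hpos := hΛ _ (hmem r (abs_of_pos hr))
  have hneg := hΛ _ (hmem (-r) (by rw [abs_neg, abs_of_pos hr]))
  simp only [map_add, map_smul, smul_eq_mul] at hpos hneg
  rcases lt_abs.1 hΛv with h | h <;> linarith

theorem log_sub_log_norm_div_two_le_kobDist {E : Type*} [NormedAddCommGroup E] [NormedSpace ℂ E]
    [CompleteSpace E] {D : Set E} {o z p : E} {r : ℝ} (hD : IsOpen D) (hconv : Convex ℝ D)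
    (hr : 0 < r) (hball : ball o r ⊆ D) (hz : z ∈ D) (hp : p ∉ D) :
    (Real.log r - Real.log ‖z - p‖) / 2 ≤ kobDist D z o := by
  obtain ⟨ℓ, hℓ⟩ := RCLike.geometric_hahn_banach_open_point (𝕜 := ℂ) hconv hD hp
  have hrepos : ∀ y ∈ D, 0 < (ℓ p + -ℓ y).re := fun y hy => by
    simpa using hℓ y hy
  have ho : o ∈ D := hball (mem_ball_self hr)
  set Λ : E →L[ℝ] ℝ := Complex.reCLM.comp (ℓ.restrictScalars ℝ)
  have hro : ‖Λ‖ * r ≤ (ℓ p + -ℓ o).re :=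
    opNorm_mul_le_of_forall_mem_ball hr fun y hy => (hℓ y (hball hy)).le
  have hzp : (ℓ p + -ℓ z).re ≤ ‖Λ‖ * ‖z - p‖ := by
    rw [← map_neg, ← map_add, ← sub_eq_add_neg, norm_sub_rev]
    exact (le_abs_self _).trans (Λ.le_opNorm (p - z))
  have hΛ : 0 < ‖Λ‖ := pos_of_mul_pos_left ((hrepos z hz).trans_le hzp) (norm_nonneg _)
  have hnorm : 0 < ‖z - p‖ := pos_of_mul_pos_right ((hrepos z hz).trans_le hzp) (norm_nonneg _)
  calc (Real.log r - Real.log ‖z - p‖) / 2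
      = (Real.log (‖Λ‖ * r) - Real.log (‖Λ‖ * ‖z - p‖)) / 2 := by
        rw [Real.log_mul hΛ.ne' hr.ne', Real.log_mul hΛ.ne' hnorm.ne', add_sub_add_left_eq_sub]
    _ ≤ (Real.log (ℓ p + -ℓ o).re - Real.log (ℓ p + -ℓ z).re) / 2 := by
        gcongr
        exact hrepos z hz
    _ ≤ kobDist {z : ℂ | 0 < z.re} (ℓ p + -ℓ z) (ℓ p + -ℓ o) :=
        log_re_sub_log_re_div_two_le_kobDist (hrepos z hz) (hrepos o ho)
    _ ≤ kobDist D z o :=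
        kobDist_map_le hD (isOpen_lt continuous_const Complex.continuous_re) (-ℓ) (ℓ p) hrepos
          (acJoinedIn_of_convex hconv hz ho)

end LowerBound

section TangentRegion

/-- The planar region `C|ζ|^(1+ε) < Re ζ` cut off at radius `r`. It models a slice of a domain with
`C^{1,ε}` boundary in an inner normal direction, the boundary point being `0`. -/
def tangentRegion (C r ε : ℝ) : Set ℂ :=
  {ζ | ‖ζ‖ < r ∧ C * ‖ζ‖ ^ (1 + ε) < ζ.re}

variable {C r ε R a u : ℝ}

theorem isOpen_tangentRegion (hε : 0 < ε) : IsOpen (tangentRegion C r ε) :=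
  (isOpen_lt continuous_norm continuous_const).inter <|
    isOpen_lt (continuous_const.mul (continuous_norm.rpow_const fun _ => .inr (by positivity)))
      Complex.continuous_re

theorem ball_subset_tangentRegion (hC : 0 ≤ C) (hε : 0 < ε) (ha : C * (3 * R) ^ (1 + ε) ≤ a)
    (haR : a ≤ R) (hRr : 3 * R ≤ r) : ball (↑(a + R) : ℂ) R ⊆ tangentRegion C r ε := by
  intro ζ hζ
  rw [mem_ball_iff_norm] at hζ
  have hR : 0 < R := (norm_nonneg _).trans_lt hζ
  have ha₀ : 0 ≤ a := le_trans (by positivity) ha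
  have hre : a < ζ.re := by
    have h := (abs_le.1 (Complex.abs_re_le_norm (ζ - ↑(a + R)))).1
    rw [Complex.sub_re, Complex.ofReal_re] at h
    linarith
  have hnorm : ‖ζ‖ < 3 * R := by
    have h := norm_le_norm_sub_add ζ (↑(a + R) : ℂ)
    rw [Complex.norm_of_nonneg (by positivity)] at h
    linarith
  refine ⟨hnorm.trans_le hRr, lt_of_le_of_lt ?_ hre⟩
  calc C * ‖ζ‖ ^ (1 + ε) ≤ C * (3 * R) ^ (1 + ε) := by gcongr
    _ ≤ a := ha

-- Partial fractions: with `s = u - a` the left side is `(s⁻¹ + (2 * R - s)⁻¹) / 2`.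
theorem div_sq_sub_sq_le (ha : 0 ≤ a) (hau : a ≤ u / 2) (hu : 0 < u) (huR : u ≤ R) :
    R / (R ^ 2 - (u - (a + R)) ^ 2) ≤ u⁻¹ / 2 + a / u ^ 2 + R⁻¹ / 2 := by
  have hs : 0 < u - a := by linarith
  have hR : 0 < R := hu.trans_le huR
  have hsR : 0 < 2 * R - (u - a) := by linarith
  have hleft : (u - a)⁻¹ ≤ u⁻¹ + 2 * (a / u ^ 2) := by
    rw [inv_le_iff_one_le_mul₀ hs]
    have h : (u⁻¹ + 2 * (a / u ^ 2)) * (u - a) = 1 + a * (u - 2 * a) / u ^ 2 := by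
      field_simp
      ring
    rw [h]
    exact le_add_of_nonneg_right (div_nonneg (mul_nonneg ha (by linarith)) (sq_nonneg u))
  have hright : (2 * R - (u - a))⁻¹ ≤ R⁻¹ := inv_anti₀ hR (by linarith)
  calc R / (R ^ 2 - (u - (a + R)) ^ 2) = ((u - a)⁻¹ + (2 * R - (u - a))⁻¹) / 2 := by
        rw [inv_add_inv hs.ne' hsR.ne', add_sub_cancel, div_right_comm,
          mul_div_cancel_left₀ R two_ne_zero]
        congr 1
        ring
    _ ≤ u⁻¹ / 2 + a / u ^ 2 + R⁻¹ / 2 := by linarith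

-- A disc of radius `u ^ (1 - γ)` centred on the real axis and at distance `K * u ^ (1 + γ)` from
-- the imaginary axis fits in the region because `(1 - γ) * (1 + ε) = 1 + γ`; this choice of `γ`
-- makes the contributions of the radius and of the distance to the error comparable.
theorem kobMetric_tangentRegion_le {K γ : ℝ} (hC : 0 ≤ C) (hε : 0 < ε) (hK : K = C * 3 ^ (1 + ε))
    (hγ : γ = ε / (2 + ε)) (hu : 0 < u) (hu₁ : u ≤ 1) (hKu : K * u ^ γ ≤ 1 / 2)
    (hur : 3 * u ^ (1 - γ) ≤ r) :
    (u : ℂ) ∈ tangentRegion C r ε ∧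
      kobMetric (tangentRegion C r ε) u 1 ≤ u⁻¹ / 2 + (K + 1 / 2) * u ^ (γ - 1) := by
  have hexp : (1 - γ) * (1 + ε) = 1 + γ := by rw [hγ]; field_simp; ring
  set R := u ^ (1 - γ) with hR
  set a := K * u ^ (1 + γ) with ha
  have ha₀ : 0 ≤ a := by rw [ha, hK]; positivity
  have hau : a ≤ u / 2 := by
    rw [ha, Real.rpow_add hu, Real.rpow_one, mul_left_comm, div_eq_mul_one_div]
    gcongr
  have huR : u ≤ R := by
    have hγ₀ : 0 ≤ γ := by rw [hγ]; positivity
    simpa using Real.rpow_le_rpow_of_exponent_ge hu hu₁ (sub_le_self 1 hγ₀)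
  have hball : ball (↑(a + R) : ℂ) R ⊆ tangentRegion C r ε := by
    refine ball_subset_tangentRegion hC hε (le_of_eq ?_) (by linarith) hur
    rw [Real.mul_rpow (by norm_num) (by positivity), ← mul_assoc, ← hK, hR, ← Real.rpow_mul hu.le,
      hexp]
  have hnorm : ‖(u : ℂ) - ↑(a + R)‖ = |u - (a + R)| := by
    rw [← Complex.ofReal_sub, Complex.norm_real, Real.norm_eq_abs]
  have hmem : (u : ℂ) ∈ ball (↑(a + R) : ℂ) R := by
    rw [mem_ball_iff_norm, hnorm, abs_lt]
    constructor <;> linarith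
  refine ⟨hball hmem, ?_⟩
  have hRinv : R⁻¹ = u ^ (γ - 1) := by rw [hR, ← Real.rpow_neg hu.le, neg_sub]
  have hadiv : a / u ^ 2 = K * u ^ (γ - 1) := by
    rw [ha, mul_div_assoc, ← Real.rpow_natCast u 2, ← Real.rpow_sub hu]
    congr 2
    push_cast
    ring
  calc kobMetric (tangentRegion C r ε) u 1 ≤ R / (R ^ 2 - (u - (a + R)) ^ 2) := by
        rw [← sq_abs (u - (a + R)), ← hnorm]
        exact kobMetric_one_le_of_ball_subset hball hmem
    _ ≤ u⁻¹ / 2 + a / u ^ 2 + R⁻¹ / 2 := div_sq_sub_sq_le ha₀ hau hu huR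
    _ = u⁻¹ / 2 + (K + 1 / 2) * u ^ (γ - 1) := by
        rw [hRinv, hadiv]
        ring

theorem eventually_const_mul_rpow_lt (c : ℝ) {p M : ℝ} (hp : 0 < p) (hM : 0 < M) :
    ∀ᶠ u : ℝ in 𝓝[>] 0, c * u ^ p < M := by
  have h := (Real.continuousAt_rpow_const 0 p (.inr hp.le)).const_mul c
  rw [ContinuousAt, Real.zero_rpow hp.ne', mul_zero] at h
  exact (h.mono_left nhdsWithin_le_nhds).eventually_lt_const hM

theorem exists_eventually_kobMetric_tangentRegion_le (hC : 0 ≤ C) (hr : 0 < r) (hε : 0 < ε) :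
    ∃ K γ : ℝ, 0 ≤ K ∧ 0 < γ ∧ ∀ᶠ u : ℝ in 𝓝[>] 0, (u : ℂ) ∈ tangentRegion C r ε ∧
      kobMetric (tangentRegion C r ε) u 1 ≤ u⁻¹ / 2 + K * u ^ (γ - 1) := by
  have hγ₀ : 0 < ε / (2 + ε) := by positivity
  have hγ₁ : ε / (2 + ε) < 1 := (div_lt_one (by positivity)).2 (by linarith)
  refine ⟨C * 3 ^ (1 + ε) + 1 / 2, ε / (2 + ε), by positivity, hγ₀, ?_⟩
  filter_upwards [Ioc_mem_nhdsGT one_pos,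
    eventually_const_mul_rpow_lt (C * 3 ^ (1 + ε)) hγ₀ one_half_pos,
    eventually_const_mul_rpow_lt 3 (sub_pos.2 hγ₁) hr] with u hu hKu hur
  exact kobMetric_tangentRegion_le hC hε rfl rfl hu.1 hu.2 hKu.le hur.le

theorem integral_inv_div_two_add_rpow_le {K γ δ t : ℝ} (hK : 0 ≤ K) (hγ : 0 < γ) (hδ : 0 < δ)
    (hδt : δ ≤ t) (ht : t ≤ 1) :
    IntervalIntegrable (fun u => u⁻¹ / 2 + K * u ^ (γ - 1)) volume δ t ∧
      ∫ u in δ..t, u⁻¹ / 2 + K * u ^ (γ - 1) ≤ (Real.log t - Real.log δ) / 2 + K / γ := by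
  have ht₀ : 0 < t := hδ.trans_le hδt
  have hzero : (0 : ℝ) ∉ uIcc δ t := by
    rw [uIcc_of_le hδt]
    exact fun h => hδ.not_ge h.1
  have hinv : IntervalIntegrable (fun u : ℝ => u⁻¹ / 2) volume δ t :=
    (intervalIntegrable_inv_iff.2 (.inr hzero)).div_const 2
  have hpow : IntervalIntegrable (fun u : ℝ => K * u ^ (γ - 1)) volume δ t :=
    (intervalIntegral.intervalIntegrable_rpow (.inr hzero)).const_mul K
  refine ⟨hinv.add hpow, ?_⟩
  rw [intervalIntegral.integral_add hinv hpow, intervalIntegral.integral_div,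
    integral_inv_of_pos hδ ht₀, intervalIntegral.integral_const_mul,
    integral_rpow (.inl (by linarith)), sub_add_cancel, Real.log_div ht₀.ne' hδ.ne',
    ← mul_div_assoc]
  gcongr
  refine mul_le_of_le_one_right hK ?_
  calc t ^ γ - δ ^ γ ≤ t ^ γ := sub_le_self _ (by positivity)
    _ ≤ 1 := Real.rpow_le_one ht₀.le ht hγ.le

theorem exists_kobDist_tangentRegion_le (hC : 0 ≤ C) (hr : 0 < r) (hε : 0 < ε) :
    ∃ A t₀ : ℝ, 0 < t₀ ∧ ∀ δ t : ℝ, 0 < δ → δ ≤ t → t ≤ t₀ →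
      ACJoinedIn (tangentRegion C r ε) δ t ∧
        kobDist (tangentRegion C r ε) δ t ≤ (Real.log t - Real.log δ) / 2 + A := by
  obtain ⟨K, γ, hK, hγ, hmetric⟩ := exists_eventually_kobMetric_tangentRegion_le hC hr hε
  obtain ⟨t₀, ht₀, hIoc⟩ := mem_nhdsGT_iff_exists_Ioc_subset.1 hmetric
  refine ⟨K / γ, min t₀ 1, lt_min ht₀ one_pos, fun δ t hδ hδt ht => ?_⟩
  have hmem : ∀ u ∈ Icc δ t, u ∈ Ioc 0 t₀ := fun u hu =>
    ⟨hδ.trans_le hu.1, hu.2.trans (ht.trans (min_le_left _ _))⟩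
  have hline : ∀ u : ℝ, (0 : ℂ) + u • (1 : ℂ) = u := fun u => by simp
  have hregion : ∀ u ∈ Icc δ t, (0 : ℂ) + u • (1 : ℂ) ∈ tangentRegion C r ε := fun u hu => by
    rw [hline]
    exact (hIoc (hmem u hu)).1
  obtain ⟨hint, hle⟩ := integral_inv_div_two_add_rpow_le hK hγ hδ hδt (ht.trans (min_le_right _ _))
  have hcurve := isACCurve_line 1 hδt hregion
  have hdist := kobDist_line_le 1 hδt hregion hint fun u hu => by
    rw [hline]
    exact (hIoc (hmem u hu)).2
  rw [hline, hline] at hcurve hdist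
  exact ⟨⟨_, _, _, _, hcurve⟩, hdist.trans hle⟩

end TangentRegion

section InnerConormals

variable {E : Type*} [NormedAddCommGroup E] [NormedSpace ℂ E] {D W : Set E} {ρ : E → ℝ}
  {o p x y : E} {Λ : E →L[ℝ] ℝ} {C r ε s : ℝ}

/-- `D` has `C^{1,ε}` boundary near the point `ξ`: the condition that `HolderC1Boundary D ε` imposes
on every boundary point. -/
def HolderC1BoundaryAt (D : Set E) (ε : ℝ) (ξ : E) : Prop :=
  ∃ (W : Set E) (ρ : E → ℝ) (M : ℝ), 0 < M ∧ IsLocalDefiningFn D ξ W ρ ∧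
    ∀ x ∈ W, ∀ y ∈ W, ‖fderiv ℝ ρ x - fderiv ℝ ρ y‖ ≤ M * ‖x - y‖ ^ ε

/-- `Λ` is a unit inner conormal of `D` at the boundary point `p`, with `C^{1,ε}` constants `C` and
`r`: the hyperplane `Λ y = Λ p` supports `D`, and within distance `r` of `p` the set `D` contains
the region above the graph of `C‖·‖^(1+ε)` over this hyperplane. -/
structure IsInnerConormal (D : Set E) (p : E) (Λ : E →L[ℝ] ℝ) (C r ε : ℝ) : Prop where
  norm_eq_one : ‖Λ‖ = 1
  nonneg : ∀ y ∈ D, 0 ≤ Λ (y - p)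
  mem : ∀ y, ‖y - p‖ < r → C * ‖y - p‖ ^ (1 + ε) < Λ (y - p) → y ∈ D

theorem IsLocalDefiningFn.nonpos_of_mem_closure (h : IsLocalDefiningFn D x W ρ)
    (hy : y ∈ closure D) (hyW : y ∈ W) : ρ y ≤ 0 := by
  obtain ⟨-, -, -, -, hneg, hzero⟩ := h
  rw [closure_eq_self_union_frontier] at hy
  rcases hy with hyD | hyF
  · exact (hneg.subset ⟨hyD, hyW⟩).2.le
  · exact (hzero.subset ⟨hyF, hyW⟩).2.le

theorem IsLocalDefiningFn.differentiableAt (h : IsLocalDefiningFn D x W ρ) (hy : y ∈ W) :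
    DifferentiableAt ℝ ρ y :=
  (h.2.2.1.differentiableOn one_ne_zero).differentiableAt (h.1.mem_nhds hy)

theorem IsLocalDefiningFn.fderiv_sub_nonpos (h : IsLocalDefiningFn D x W ρ) (hconv : Convex ℝ D)
    (hp : p ∈ frontier D) (hpW : p ∈ W) (hy : y ∈ D) : fderiv ℝ ρ p (y - p) ≤ 0 := by
  have hzero : ρ p = 0 := (h.2.2.2.2.2.subset ⟨hp, hpW⟩).2
  have hmax : IsLocalMaxOn ρ (closure D) p := by
    filter_upwards [self_mem_nhdsWithin, nhdsWithin_le_nhds (h.1.mem_nhds hpW)] with q hq hqW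
    rw [hzero]
    exact h.nonpos_of_mem_closure hq hqW
  exact hmax.hasFDerivWithinAt_nonpos (h.differentiableAt hpW).hasFDerivAt.hasFDerivWithinAt
    (sub_mem_posTangentConeAt_of_segment_subset
      (hconv.closure.segment_subset (frontier_subset_closure hp) (subset_closure hy)))

theorem abs_sub_sub_fderiv_le_mul_rpow {M : ℝ} (hε : 0 ≤ ε) (hM : 0 ≤ M)
    (hdiff : ∀ q ∈ ball p r, DifferentiableAt ℝ ρ q)
    (hHolder : ∀ q ∈ ball p r, ‖fderiv ℝ ρ q - fderiv ℝ ρ p‖ ≤ M * ‖q - p‖ ^ ε)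
    (hy : y ∈ ball p r) : |ρ y - ρ p - fderiv ℝ ρ p (y - p)| ≤ M * ‖y - p‖ ^ (1 + ε) := by
  have hsub : closedBall p ‖y - p‖ ⊆ ball p r := closedBall_subset_ball (mem_ball_iff_norm.1 hy)
  have hbound : ∀ q ∈ closedBall p ‖y - p‖,
      ‖fderiv ℝ ρ q - fderiv ℝ ρ p‖ ≤ M * ‖y - p‖ ^ ε := fun q hq => by
    refine (hHolder q (hsub hq)).trans ?_
    gcongr
    exact mem_closedBall_iff_norm.1 hq
  rw [Real.rpow_one_add' (norm_nonneg _) (by positivity), mul_left_comm, mul_comm]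
  exact (convex_closedBall p ‖y - p‖).norm_image_sub_le_of_norm_fderiv_le'
    (fun q hq => hdiff q (hsub hq)) hbound (mem_closedBall_self (norm_nonneg _))
    (mem_closedBall_iff_norm.2 le_rfl)

theorem IsLocalDefiningFn.isInnerConormal {M m : ℝ} (h : IsLocalDefiningFn D x W ρ)
    (hconv : Convex ℝ D) (hε : 0 ≤ ε) (hM : 0 ≤ M)
    (hHolder : ∀ q ∈ W, ∀ q' ∈ W, ‖fderiv ℝ ρ q - fderiv ℝ ρ q'‖ ≤ M * ‖q - q'‖ ^ ε)
    (hp : p ∈ frontier D) (hr : 0 < r) (hball : ball p r ⊆ W) (hm : 0 < m)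
    (hmp : m ≤ ‖fderiv ℝ ρ p‖) :
    IsInnerConormal D p (-‖fderiv ℝ ρ p‖⁻¹ • fderiv ℝ ρ p) (M / m) r ε := by
  have hpW : p ∈ W := hball (mem_ball_self hr)
  have hnorm : 0 < ‖fderiv ℝ ρ p‖ := hm.trans_le hmp
  have hzero : ρ p = 0 := (h.2.2.2.2.2.subset ⟨hp, hpW⟩).2
  refine ⟨?_, fun y hy => ?_, fun y hy hlt => ?_⟩
  · rw [norm_smul, norm_neg, norm_inv, norm_norm, inv_mul_cancel₀ hnorm.ne']
  · exact mul_nonneg_of_nonpos_of_nonpos (neg_nonpos.2 (inv_nonneg.2 hnorm.le))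
      (h.fderiv_sub_nonpos hconv hp hpW hy)
  · rw [← mem_ball_iff_norm] at hy
    have htaylor := abs_sub_sub_fderiv_le_mul_rpow hε hM
      (fun q hq => h.differentiableAt (hball hq))
      (fun q hq => hHolder q (hball hq) p hpW) hy
    have hderiv : M * ‖y - p‖ ^ (1 + ε) < -fderiv ℝ ρ p (y - p) := by
      calc M * ‖y - p‖ ^ (1 + ε) = m * (M / m * ‖y - p‖ ^ (1 + ε)) := by field_simp
        _ ≤ ‖fderiv ℝ ρ p‖ * (M / m * ‖y - p‖ ^ (1 + ε)) := by gcongr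
        _ < ‖fderiv ℝ ρ p‖ * (-‖fderiv ℝ ρ p‖⁻¹ * fderiv ℝ ρ p (y - p)) :=
          mul_lt_mul_of_pos_left hlt hnorm
        _ = -fderiv ℝ ρ p (y - p) := by field_simp
    have hneg : ρ y < 0 := by linarith [le_abs_self (ρ y - ρ p - fderiv ℝ ρ p (y - p))]
    exact (h.2.2.2.2.1.superset ⟨hball hy, hneg⟩).1

theorem exists_isInnerConormal (hconv : Convex ℝ D) (hε : 0 ≤ ε) (h : HolderC1BoundaryAt D ε x) :
    ∃ C r : ℝ, 0 ≤ C ∧ 0 < r ∧ ∀ p ∈ frontier D, ‖p - x‖ < r →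
      ∃ Λ : E →L[ℝ] ℝ, IsInnerConormal D p Λ C r ε := by
  obtain ⟨W, ρ, M, hM, hρ, hHolder⟩ := h
  have hxW : W ∈ 𝓝 x := hρ.1.mem_nhds hρ.2.1
  have hLx : 0 < ‖fderiv ℝ ρ x‖ := norm_pos_iff.2 (hρ.2.2.2.1 x hρ.2.1)
  have hcont : ContinuousAt (fderiv ℝ ρ) x :=
    (hρ.2.2.1.continuousOn_fderiv_of_isOpen hρ.1 le_rfl).continuousAt hxW
  have hgrad : ∀ᶠ p in 𝓝 x, ‖fderiv ℝ ρ x‖ / 2 < ‖fderiv ℝ ρ p‖ :=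
    hcont.norm.eventually_const_lt (half_lt_self hLx)
  obtain ⟨r, hr, hball⟩ := Metric.mem_nhds_iff.1 (inter_mem hxW hgrad)
  refine ⟨M / (‖fderiv ℝ ρ x‖ / 2), r / 2, by positivity, half_pos hr, fun p hp hpx => ⟨_,
    hρ.isInnerConormal hconv hε hM.le hHolder hp (half_pos hr) (fun q hq => ?_) (half_pos hLx) ?_⟩⟩
  · refine (hball ?_).1
    exact ball_subset (by rw [dist_eq_norm]; linarith) hq
  · exact le_of_lt (hball (mem_ball_iff_norm.2 (hpx.trans (half_lt_self hr)))).2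

namespace IsInnerConormal

theorem abs_apply_le (h : IsInnerConormal D p Λ C r ε) (v : E) : |Λ v| ≤ ‖v‖ := by
  simpa only [h.norm_eq_one, one_mul, Real.norm_eq_abs] using Λ.le_opNorm v

theorem radius_le_apply_sub (h : IsInnerConormal D p Λ C r ε) (hs : 0 < s) (hball : ball o s ⊆ D) :
    s ≤ Λ (o - p) := by
  have hle := opNorm_mul_le_of_forall_mem_ball (Λ := -Λ) (κ := -Λ p) hs fun y hy => by
    have := h.nonneg y (hball hy)
    rw [map_sub] at this
    rw [neg_apply]
    linarith
  rw [norm_neg, h.norm_eq_one, one_mul, neg_apply] at hle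
  rw [map_sub]
  linarith

end IsInnerConormal

end InnerConormals

section InnerSlices

variable {E : Type*} [NormedAddCommGroup E] [NormedSpace ℂ E] {D : Set E} {o p v x z : E}
  {e : E} {Λ : E →L[ℝ] ℝ} {C r δ ε μ s t : ℝ}

theorem mk_sq_div_mem_ball {τ : ℝ} (hτ₀ : τ ≠ 0) (hτ : |τ| < δ) :
    (⟨τ ^ 2 / δ, τ⟩ : ℂ) ∈ ball (δ : ℂ) δ := by
  have hδ : 0 < δ := (abs_nonneg τ).trans_lt hτ
  rw [mem_ball_iff_norm, ← sq_lt_sq₀ (norm_nonneg _) hδ.le, Complex.sq_norm, Complex.normSq_apply]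
  simp only [Complex.sub_re, Complex.sub_im, Complex.ofReal_re, Complex.ofReal_im]
  have hτδ : τ ^ 2 < δ ^ 2 := by rwa [← sq_abs, sq_lt_sq₀ (abs_nonneg τ) hδ.le]
  have hτsq : 0 < τ ^ 2 := by positivity
  have hquot : τ ^ 2 / δ * (τ ^ 2 / δ) < τ ^ 2 := by
    rw [← sq, div_pow, div_lt_iff₀ (by positivity), sq (τ ^ 2)]
    exact mul_lt_mul_of_pos_left hτδ hτsq
  have hcross : τ ^ 2 / δ * δ = τ ^ 2 := div_mul_cancel₀ _ hδ.ne'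
  linarith

-- Near `0` the points `τ ^ 2 / δ + τ * I` of the disc are tangential to its boundary, which forces
-- `f I = 0`.
theorem apply_eq_re_mul_of_nonneg_on_ball (f : ℂ →L[ℝ] ℝ) (hδ : 0 < δ)
    (hf : ∀ ζ ∈ ball (δ : ℂ) δ, 0 ≤ f ζ) (ζ : ℂ) : f ζ = ζ.re * f 1 := by
  have hdecomp : ∀ ζ : ℂ, f ζ = ζ.re * f 1 + ζ.im * f Complex.I := fun ζ => by
    conv_lhs => rw [← Complex.re_add_im ζ, ← mul_one (ζ.re : ℂ), map_add, ← Complex.real_smul,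
      ← Complex.real_smul, map_smul, map_smul, smul_eq_mul, smul_eq_mul]
  have htangent : ∀ τ : ℝ, τ ≠ 0 → |τ| < δ → 0 ≤ τ ^ 2 / δ * f 1 + τ * f Complex.I :=
    fun τ hτ₀ hτ => (hf _ (mk_sq_div_mem_ball hτ₀ hτ)).trans_eq (hdecomp _)
  have hI : f Complex.I = 0 := by
    have hlim : Tendsto (fun τ : ℝ => τ / δ * f 1) (𝓝[>] 0) (𝓝 0) := by
      have h : Tendsto (fun τ : ℝ => τ / δ * f 1) (𝓝 0) (𝓝 (0 / δ * f 1)) :=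
        (tendsto_id.div_const δ).mul_const (f 1)
      rw [zero_div, zero_mul] at h
      exact h.mono_left nhdsWithin_le_nhds
    refine abs_nonpos_iff.1 (ge_of_tendsto hlim ?_)
    filter_upwards [Ioo_mem_nhdsGT hδ] with τ ⟨hτ₀, hτ⟩
    have hpos := htangent τ hτ₀.ne' (by rwa [abs_of_pos hτ₀])
    have hneg := htangent (-τ) (neg_ne_zero.2 hτ₀.ne') (by rwa [abs_neg, abs_of_pos hτ₀])
    have hscale : τ ^ 2 / δ * f 1 = τ * (τ / δ * f 1) := by ring
    rw [neg_sq] at hneg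
    refine le_of_mul_le_mul_left (a := τ) ?_ hτ₀
    rw [← abs_of_pos hτ₀, ← abs_mul, abs_of_pos hτ₀, abs_le]
    constructor <;> linarith
  rw [hdecomp, hI, mul_zero, add_zero]

theorem exists_notMem_ball_zero_norm_subset {F : Type*} [SeminormedAddCommGroup F] [ProperSpace F]
    {U : Set F} {q : F} (hU : IsOpen U) (hq : q ∉ U) :
    ∃ q₀ ∉ U, ‖q₀‖ ≤ ‖q‖ ∧ ball 0 ‖q₀‖ ⊆ U := by
  obtain ⟨q₀, hq₀, hdist⟩ := hU.isClosed_compl.exists_infDist_eq_dist ⟨q, hq⟩ 0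
  rw [dist_zero_left] at hdist
  have hmin : ∀ y ∉ U, ‖q₀‖ ≤ ‖y‖ := fun y hy => by
    rw [← hdist, ← dist_zero_left]
    exact infDist_le_dist_of_mem hy
  refine ⟨q₀, hq₀, hmin q hq, fun y hy => ?_⟩
  by_contra hyU
  exact (mem_ball_zero_iff.1 hy).not_ge (hmin y hyU)

theorem exists_mem_frontier_foot (hD : IsOpen D) (hz : z ∈ D) (hs : 0 ≤ s)
    (hzs : z - s • v ∉ D) : ∃ (c : ℂ) (δ : ℝ) (p : E), ‖c‖ = 1 ∧ 0 < δ ∧ δ ≤ s ∧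
      p ∈ frontier D ∧ z = p + δ • c • v ∧ ∀ ζ ∈ ball (δ : ℂ) δ, p + ζ • c • v ∈ D := by
  have hcont : Continuous fun ζ : ℂ => z - ζ • v := by fun_prop
  obtain ⟨ζ₀, hζ₀, hζ₀s, hball⟩ := exists_notMem_ball_zero_norm_subset (hD.preimage hcont)
    (q := (s : ℂ)) (by rwa [mem_preimage, Complex.coe_smul])
  rw [Complex.norm_of_nonneg hs] at hζ₀s
  have hδ : 0 < ‖ζ₀‖ := norm_pos_iff.2 <| by
    rintro rfl
    exact hζ₀ (by rwa [mem_preimage, zero_smul, sub_zero])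
  have hfrontier : z - ζ₀ • v ∈ frontier D := by
    rw [hD.frontier_eq]
    refine ⟨map_mem_closure (f := fun ζ : ℂ => z - ζ • v) hcont ?_ hball, hζ₀⟩
    rw [closure_ball _ hδ.ne']
    exact mem_closedBall_zero_iff.2 le_rfl
  have hδc : (‖ζ₀‖ : ℂ) * (ζ₀ / ‖ζ₀‖) = ζ₀ := mul_div_cancel₀ _ (Complex.ofReal_ne_zero.2 hδ.ne')
  have hc : ‖ζ₀ / ‖ζ₀‖‖ = 1 := by rw [norm_div, Complex.norm_real, norm_norm, div_self hδ.ne']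
  refine ⟨ζ₀ / ‖ζ₀‖, ‖ζ₀‖, z - ζ₀ • v, hc, hδ, hζ₀s, hfrontier, ?_, fun ζ hζ => ?_⟩
  · rw [← Complex.coe_smul, smul_smul, hδc, sub_add_cancel]
  · have hmem : z - ((‖ζ₀‖ - ζ) * (ζ₀ / ‖ζ₀‖)) • v ∈ D := hball <| by
      rw [mem_ball_zero_iff, norm_mul, hc, mul_one, norm_sub_rev]
      exact mem_ball_iff_norm.1 hζ
    rw [sub_mul, hδc, sub_smul, mul_smul] at hmem
    convert hmem using 1
    abel

theorem sub_smul_sub_notMem (hconv : Convex ℝ D) (hball : ball o r ⊆ D) (hx : x ∉ D) (hs : 0 < s)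
    (hzx : ‖z - x‖ < s * r) : z - s • (o - x) ∉ D := by
  intro hy
  have ho' : o - s⁻¹ • (z - x) ∈ D := hball <| by
    rw [mem_ball_iff_norm, sub_sub_cancel_left, norm_neg, norm_smul, norm_inv,
      Real.norm_of_nonneg hs.le]
    exact (inv_mul_lt_iff₀ hs).2 hzx
  have hcomb := hconv hy ho' (a := (1 + s)⁻¹) (b := (1 + s)⁻¹ * s) (by positivity) (by positivity)
    (by field_simp)
  refine hx ?_
  convert hcomb using 1
  rw [mul_smul, ← smul_add, smul_sub s o (s⁻¹ • _), smul_inv_smul₀ hs.ne',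
    eq_inv_smul_iff₀ (by positivity)]
  module

/-- The real hyperplane supporting `D` at `p` meets the complex line `p + ℂ e` along the real line
`Re ζ = 0`, and `e` is transversal to this hyperplane with constant `μ`. -/
structure IsInnerSlice (D : Set E) (p e : E) (Λ : E →L[ℝ] ℝ) (C r ε μ : ℝ) : Prop
    extends IsInnerConormal D p Λ C r ε where
  le_apply : μ ≤ Λ e
  apply_smul : ∀ ζ : ℂ, Λ (ζ • e) = ζ.re * Λ e

theorem IsInnerConormal.isInnerSlice (h : IsInnerConormal D p Λ C r ε) {c : ℂ} (hc : ‖c‖ = 1)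
    (hδ : 0 < δ) (hslice : ∀ ζ ∈ ball (δ : ℂ) δ, p + ζ • c • v ∈ D) (hμ : μ ≤ Λ v) :
    IsInnerSlice D p (c • v) Λ C r ε μ := by
  set f : ℂ →L[ℝ] ℝ := Λ.comp ((ContinuousLinearMap.toSpanSingleton ℂ (c • v)).restrictScalars ℝ)
  have hf : ∀ ζ ∈ ball (δ : ℂ) δ, 0 ≤ f ζ := fun ζ hζ => by
    simpa [f] using h.nonneg _ (hslice ζ hζ)
  have hre : ∀ ζ : ℂ, Λ (ζ • c • v) = ζ.re * Λ (c • v) := fun ζ => by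
    simpa [f] using apply_eq_re_mul_of_nonneg_on_ball f hδ hf ζ
  have hpos : 0 ≤ Λ (c • v) := by
    have hδδ := hf δ (mem_ball_self hδ)
    rw [apply_eq_re_mul_of_nonneg_on_ball f hδ hf, Complex.ofReal_re] at hδδ
    simpa [f] using nonneg_of_mul_nonneg_right hδδ hδ
  have hc₀ : c ≠ 0 := norm_pos_iff.1 (hc.symm ▸ one_pos)
  refine ⟨h, hμ.trans ?_, hre⟩
  calc Λ v = (c⁻¹).re * Λ (c • v) := by rw [← hre, inv_smul_smul₀ hc₀]
    _ ≤ ‖c⁻¹‖ * Λ (c • v) := by gcongr; exact Complex.re_le_norm _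
    _ = Λ (c • v) := by rw [norm_inv, hc, inv_one, one_mul]

theorem exists_isInnerSlice (hD : IsOpen D) (hconv : Convex ℝ D) (hs : 0 < s)
    (hball : ball o s ⊆ D) (hx : x ∉ D) (hz : z ∈ D) (ht : 0 < t) (hzx : ‖z - x‖ < t * s)
    (htr : 2 * t * ‖o - x‖ < r) (hts : 2 * t * ‖o - x‖ ≤ s / 2)
    (hconormal : ∀ p ∈ frontier D, ‖p - x‖ < r →
      ∃ Λ : E →L[ℝ] ℝ, IsInnerConormal D p Λ C r ε) :
    ∃ (e p : E) (δ : ℝ) (Λ : E →L[ℝ] ℝ), ‖e‖ = ‖o - x‖ ∧ ‖p - x‖ ≤ 2 * t * ‖o - x‖ ∧ p ∉ D ∧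
      0 < δ ∧ δ ≤ t ∧ z = p + δ • e ∧ IsInnerSlice D p e Λ C r ε (s / 2) := by
  obtain ⟨c, δ, p, hc, hδ, hδt, hp, hzp, hslice⟩ :=
    exists_mem_frontier_foot hD hz ht.le (sub_smul_sub_notMem hconv hball hx ht hzx)
  have hso : s ≤ ‖o - x‖ := by
    by_contra! hlt
    exact hx (hball (mem_ball_iff_norm'.2 hlt))
  have hnorm : ‖c • (o - x)‖ = ‖o - x‖ := by rw [norm_smul, hc, one_mul]
  have hpx : ‖p - x‖ ≤ 2 * t * ‖o - x‖ := by
    calc ‖p - x‖ = ‖(z - x) - δ • c • (o - x)‖ := by rw [hzp]; congr 1; abel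
      _ ≤ ‖z - x‖ + ‖δ • c • (o - x)‖ := norm_sub_le _ _
      _ = ‖z - x‖ + δ * ‖o - x‖ := by rw [norm_smul, hnorm, Real.norm_of_nonneg hδ.le]
      _ ≤ t * ‖o - x‖ + t * ‖o - x‖ := by gcongr; exact hzx.le.trans (by gcongr)
      _ = 2 * t * ‖o - x‖ := by ring
  obtain ⟨Λ, hΛ⟩ := hconormal p hp (hpx.trans_lt htr)
  have hΛv : s / 2 ≤ Λ (o - x) := by
    rw [← sub_add_sub_cancel o p x, map_add]
    linarith [hΛ.radius_le_apply_sub hs hball, neg_le_of_abs_le (hΛ.abs_apply_le (p - x))]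
  rw [hD.frontier_eq] at hp
  exact ⟨_, p, δ, Λ, hnorm, hpx, hp.2, hδ, hδt, hzp, hΛ.isInnerSlice hc hδ hslice hΛv⟩

namespace IsInnerSlice

theorem mapsTo_tangentRegion (h : IsInnerSlice D p e Λ C r ε μ) (he : 0 < ‖e‖) (hμ : 0 < μ)
    (hC : 0 ≤ C) :
    MapsTo (fun ζ : ℂ => p + ζ • e) (tangentRegion (C * ‖e‖ ^ (1 + ε) / μ) (r / ‖e‖) ε) D := by
  rintro ζ ⟨hζr, hζ⟩
  have hpos : 0 < ζ.re := lt_of_le_of_lt (by positivity) hζ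
  refine h.mem _ ?_ ?_ <;> rw [add_sub_cancel_left, norm_smul]
  · exact (lt_div_iff₀ he).1 hζr
  · rw [Real.mul_rpow (norm_nonneg _) (norm_nonneg _), h.apply_smul]
    calc C * (‖ζ‖ ^ (1 + ε) * ‖e‖ ^ (1 + ε))
        = C * ‖e‖ ^ (1 + ε) / μ * ‖ζ‖ ^ (1 + ε) * μ := by field_simp
      _ < ζ.re * μ := by gcongr
      _ ≤ ζ.re * Λ e := by gcongr; exact h.le_apply

theorem ball_subset (h : IsInnerSlice D p e Λ C r ε μ) (hC : 0 ≤ C) (hε : 0 < ε) (ht : 0 < t)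
    (hμ : 0 < μ) (hr : 2 * t * ‖e‖ ≤ r)
    (hCt : C * (2 * t * ‖e‖) ^ (1 + ε) ≤ t * (μ / 2)) : ball (p + t • e) (t * (μ / 2)) ⊆ D := by
  intro y hy
  rw [mem_ball_iff_norm] at hy
  set u := y - (p + t • e) with hu
  have hyp : y - p = t • e + u := by rw [hu]; abel
  have hμ' : μ ≤ ‖e‖ := (h.le_apply.trans (le_abs_self _)).trans (h.abs_apply_le e)
  have hnorm : ‖y - p‖ < 2 * t * ‖e‖ := by
    have hte : ‖t • e‖ = t * ‖e‖ := by rw [norm_smul, Real.norm_of_nonneg ht.le]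
    have hμt : t * (μ / 2) ≤ t * ‖e‖ := by gcongr; linarith
    rw [hyp]
    linarith [norm_add_le (t • e) u]
  refine h.mem y (hnorm.trans_le hr) ?_
  calc C * ‖y - p‖ ^ (1 + ε) ≤ C * (2 * t * ‖e‖) ^ (1 + ε) := by gcongr
    _ ≤ t * (μ / 2) := hCt
    _ < t * μ + Λ u := by linarith [neg_le_of_abs_le (h.abs_apply_le u)]
    _ ≤ t * Λ e + Λ u := by gcongr; exact h.le_apply
    _ = Λ (y - p) := by rw [hyp, map_add, map_smul, smul_eq_mul]

theorem kobDist_add_smul_le_kobDist_add_log [CompleteSpace E] {A : ℝ}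
    (h : IsInnerSlice D p e Λ C r ε μ) (hD : IsOpen D) (hconv : Convex ℝ D) (hs : 0 < s)
    (hball : ball o s ⊆ D) (hz : p + δ • e ∈ D) (hp : p ∉ D) (he : 0 < ‖e‖) (hμ : 0 < μ)
    (hC : 0 ≤ C) (hε : 0 < ε) (hδ : 0 < δ)
    (hjoined : ACJoinedIn (tangentRegion (C * ‖e‖ ^ (1 + ε) / μ) (r / ‖e‖) ε) δ t)
    (hupper : kobDist (tangentRegion (C * ‖e‖ ^ (1 + ε) / μ) (r / ‖e‖) ε) δ t ≤
      (Real.log t - Real.log δ) / 2 + A) :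
    kobDist D (p + δ • e) (p + t • e) ≤
      kobDist D (p + δ • e) o + Real.log t / 2 + (A + (Real.log ‖e‖ - Real.log s) / 2) := by
  have hpush := kobDist_map_le (isOpen_tangentRegion hε) hD
    (ContinuousLinearMap.toSpanSingleton ℂ e) p (h.mapsTo_tangentRegion he hμ hC) hjoined
  have hlower := log_sub_log_norm_div_two_le_kobDist hD hconv hs hball hz hp
  rw [add_sub_cancel_left, norm_smul, Real.norm_of_nonneg hδ.le,
    Real.log_mul hδ.ne' he.ne'] at hlower
  calc kobDist D (p + δ • e) (p + t • e) ≤ (Real.log t - Real.log δ) / 2 + A :=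
        hpush.trans hupper
    _ ≤ _ := by linarith

end IsInnerSlice

end InnerSlices

section Escape

variable {E : Type*} [NormedAddCommGroup E] [NormedSpace ℂ E] [CompleteSpace E] {D : Set E}
  {o x : E} {ε s : ℝ}

theorem exists_escape (hD : IsOpen D) (hconv : Convex ℝ D) (hs : 0 < s) (hball : ball o s ⊆ D)
    (hx : x ∉ D) (hε : 0 < ε) (hsmooth : HolderC1BoundaryAt D ε x) :
    ∃ A κ c : ℝ, 0 < κ ∧ ∀ᶠ t in 𝓝[>] (0 : ℝ), ∀ z ∈ D, ‖z - x‖ < t * s → ∃ z' : E,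
      ball z' (t * κ) ⊆ D ∧ ‖z' - x‖ ≤ t * c ∧
        kobDist D z z' ≤ kobDist D z o + Real.log t / 2 + A := by
  obtain ⟨C, r, hC, hr, hconormal⟩ := exists_isInnerConormal hconv hε.le hsmooth
  have hB : 0 < ‖o - x‖ :=
    norm_pos_iff.2 (sub_ne_zero.2 (ne_of_mem_of_not_mem (hball (mem_ball_self hs)) hx))
  set B := ‖o - x‖
  obtain ⟨A, t₀, ht₀, hregion⟩ := exists_kobDist_tangentRegion_le
    (C := C * B ^ (1 + ε) / (s / 2)) (r := r / B) (by positivity) (by positivity) hε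
  refine ⟨A + (Real.log B - Real.log s) / 2, s / 2 / 2, 3 * B, by positivity, ?_⟩
  filter_upwards [Ioc_mem_nhdsGT ht₀,
    eventually_const_mul_rpow_lt (2 * B) one_pos (lt_min hr (half_pos hs)),
    eventually_const_mul_rpow_lt (C * (2 * B) ^ (1 + ε)) hε (half_pos (half_pos hs))]
    with t ⟨ht, htt₀⟩ htB htC z hz hzx
  rw [Real.rpow_one, mul_right_comm, lt_min_iff] at htB
  obtain ⟨e, p, δ, Λ, hnorm, hpx, hp, hδ, hδt, rfl, hslice⟩ :=
    exists_isInnerSlice hD hconv hs hball hx hz ht hzx htB.1 htB.2.le hconormal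
  replace hnorm : ‖e‖ = B := hnorm
  obtain ⟨hjoined, hupper⟩ := hregion δ t hδ hδt htt₀
  rw [← hnorm] at hjoined hupper hB
  refine ⟨p + t • e, ?_, ?_, ?_⟩
  · refine hslice.ball_subset hC hε ht (half_pos hs) (by rw [hnorm]; exact htB.1.le) ?_
    rw [hnorm, mul_right_comm 2 t B, Real.mul_rpow (by positivity) ht.le, ← mul_assoc,
      Real.rpow_one_add' ht.le (by positivity), mul_left_comm]
    gcongr
  · calc ‖p + t • e - x‖ = ‖(p - x) + t • e‖ := by congr 1; abel
      _ ≤ ‖p - x‖ + ‖t • e‖ := norm_add_le _ _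
      _ ≤ 2 * t * B + t * B := by
        rw [norm_smul, hnorm, Real.norm_of_nonneg ht.le]
        gcongr
      _ = t * (3 * B) := by ring
  · rw [← hnorm]
    exact hslice.kobDist_add_smul_le_kobDist_add_log hD hconv hs hball hz hp hB (half_pos hs) hC hε
      hδ hjoined hupper

theorem exists_le_gromovProd (hD : IsOpen D) (hconv : Convex ℝ D) (hs : 0 < s)
    (hball : ball o s ⊆ D) (hx : x ∉ D) (hε : 0 < ε) (hsmooth : HolderC1BoundaryAt D ε x) :
    ∃ A : ℝ, ∀ᶠ t in 𝓝[>] (0 : ℝ), ∀ z ∈ D, ∀ w ∈ D, ‖z - x‖ < t * s → ‖w - x‖ < t * s →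
      -Real.log t / 2 - A ≤ gromovProd D o z w := by
  obtain ⟨A, κ, c, hκ, hescape⟩ := exists_escape hD hconv hs hball hx hε hsmooth
  refine ⟨A + c / κ, ?_⟩
  filter_upwards [hescape, self_mem_nhdsWithin] with t ht (ht₀ : 0 < t) z hz w hw hzx hwx
  obtain ⟨z', hz'ball, hz'x, hzz'⟩ := ht z hz hzx
  obtain ⟨w', hw'ball, hw'x, hww'⟩ := ht w hw hwx
  have htκ : 0 < t * κ := mul_pos ht₀ hκ
  have hz' : z' ∈ D := hz'ball (mem_ball_self htκ)
  have hw' : w' ∈ D := hw'ball (mem_ball_self htκ)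
  have hmiddle : kobDist D z' w' ≤ 2 * (c / κ) := by
    calc kobDist D z' w' ≤ ‖w' - z'‖ / (t * κ) :=
          kobDist_le_norm_sub_div hconv htκ hz'ball hw'ball
      _ ≤ (t * c + t * c) / (t * κ) := by
        gcongr
        rw [← sub_sub_sub_cancel_right w' z' x]
        exact (norm_sub_le _ _).trans (add_le_add hw'x hz'x)
      _ = 2 * (c / κ) := by field_simp; ring
  have htriangle : kobDist D z w ≤ kobDist D z z' + (kobDist D z' w' + kobDist D w w') := by
    rw [kobDist_symm D w w']
    have hjoin : ∀ {a b : E}, a ∈ D → b ∈ D → ACJoinedIn D a b := acJoinedIn_of_convex hconv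
    exact (kobDist_triangle hD (hjoin hz hz') (hjoin hz' hw)).trans <| by
      gcongr
      exact kobDist_triangle hD (hjoin hz' hw') (hjoin hw' hw)
  rw [gromovProd, kobDist_symm D o w]
  linarith

end Escape

theorem statement_18_general {E : Type*} [NormedAddCommGroup E] [NormedSpace ℂ E] [CompleteSpace E]
    {D : Set E} (hD : IsOpen D) (hconv : Convex ℝ D) {o : E} (ho : o ∈ D) {x : E}
    (hx : x ∈ frontier D) {ε : ℝ} (hε : 0 < ε) (hsmooth : HolderC1BoundaryAt D ε x) :
    Tendsto (fun p : E × E => gromovProd D o p.1 p.2) (𝓝[D] x ×ˢ 𝓝[D] x) atTop := by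
  obtain ⟨s, hs, hball⟩ := Metric.isOpen_iff.1 hD o ho
  rw [hD.frontier_eq] at hx
  obtain ⟨A, hgromov⟩ := exists_le_gromovProd hD hconv hs hball hx.2 hε hsmooth
  have hlog : Tendsto (fun t => -Real.log t / 2 - A) (𝓝[>] 0) atTop :=
    tendsto_atTop_add_const_right _ _
      ((tendsto_neg_atBot_atTop.comp Real.tendsto_log_nhdsGT_zero).atTop_div_const two_pos)
  refine tendsto_atTop.2 fun N => ?_
  obtain ⟨t, ht, hN, ht₀⟩ :=
    (hgromov.and ((hlog.eventually_ge_atTop N).and self_mem_nhdsWithin)).exists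
  have hnear : ∀ᶠ z in 𝓝[D] x, z ∈ D ∧ ‖z - x‖ < t * s := by
    filter_upwards [self_mem_nhdsWithin,
      nhdsWithin_le_nhds (ball_mem_nhds x (mul_pos ht₀ hs))] with z hz hzx
    exact ⟨hz, mem_ball_iff_norm.1 hzx⟩
  filter_upwards [hnear.prod_mk hnear] with p ⟨⟨hz, hzx⟩, hw, hwx⟩
  exact hN.trans (ht _ hz _ hw hzx hwx)

theorem statement_18 {n : ℕ}
    (Ω : Set (EuclideanSpace ℂ (Fin n)))
    (hΩo : IsOpen Ω) (hne : Ω.Nonempty) (hΩb : Bornology.IsBounded Ω)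
    (hconv : Convex ℝ Ω)
    (ε : ℝ) (hε : 0 < ε) (hbd : HolderC1Boundary Ω ε)
    (o : EuclideanSpace ℂ (Fin n)) (ho : o ∈ Ω)
    (z w : ℕ → EuclideanSpace ℂ (Fin n)) (hz : ∀ k, z k ∈ Ω) (hw : ∀ m, w m ∈ Ω)
    (x : EuclideanSpace ℂ (Fin n)) (hx : x ∈ frontier Ω)
    (hzlim : Tendsto z atTop (𝓝 x)) (hwlim : Tendsto w atTop (𝓝 x)) :
    Tendsto (fun p : ℕ × ℕ => gromovProd Ω o (z p.1) (w p.2)) atTop atTop := by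
  have hz' : Tendsto z atTop (𝓝[Ω] x) := tendsto_nhdsWithin_iff.2 ⟨hzlim, .of_forall hz⟩
  have hw' : Tendsto w atTop (𝓝[Ω] x) := tendsto_nhdsWithin_iff.2 ⟨hwlim, .of_forall hw⟩
  rw [← prod_atTop_atTop_eq]
  simpa only [Function.comp_def, Prod.map] using
    (statement_18_general hΩo hconv ho hx hε (hbd x hx)).comp (hz'.prodMap hw')
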